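/- arXiv:1305.6162 — 2 statements merged into one kernel-verified Lean document; each statement's English description precedes it below -/
import Mathlib

section
/- Under the isomorphism Ψ : M^p_q → (V^{⊗n})_k, N_w ↦ v_{η_min·w}, the canonical basis element N̲_w of M^p_q is mapped to Lusztig's canonical basis element v^{◊}_{η_min·w} of V^{⊗n}, for every w ∈ W^{p+q}. -/
open scoped Classical

set_option maxHeartbeats 1000000
set_option synthInstance.maxHeartbeats 200000

noncomputable section

abbrev K : Type := RatFunc ℂ

noncomputable def q : K := RatFunc.X

/-- The quantum integer `[k] = (q^k - q^{-k})/(q - q^{-1})`. -/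
noncomputable def qnum (k : ℕ) : K := (q ^ k - q⁻¹ ^ k) / (q - q⁻¹)

/-- The quantum factorial `[k]! = [k][k-1]⋯[1]`. -/
noncomputable def qfact : ℕ → K
  | 0 => 1
  | k + 1 => qnum (k + 1) * qfact k

/-- The underlying vector space of `V(a_1) ⊗ ⋯ ⊗ V(a_l)`, with standard basis indexed by
sequences `η ∈ {0,1}^l`. -/
abbrev V (n : ℕ) : Type := (Fin n → Fin 2) → K

/-- The standard basis vector `v^a_η`. -/
noncomputable def eb {n : ℕ} (η : Fin n → Fin 2) : V n := fun γ => if γ = η then 1 else 0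

/-- The number of `1`s in `γ` strictly before position `i` (the Koszul sign exponent). -/
def onesBefore {n : ℕ} (γ : Fin n → Fin 2) (i : Fin n) : ℕ :=
  (Finset.univ.filter (fun k => k < i ∧ γ k = 1)).card

/-- The action of `E` on `V(a_1) ⊗ ⋯ ⊗ V(a_l)` (via the iterated comultiplication
`Δ(E) = E ⊗ K⁻¹ + 1 ⊗ E`, with the Koszul sign rule). -/
noncomputable def Eop (a : ℕ → ℕ) (n : ℕ) : Module.End K (V n) where
  toFun f := fun γ => ∑ i : Fin n,
    if γ i = 0 then
      ((-1 : K) ^ onesBefore γ i) * qnum (a i)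
        * q ^ (-((∑ j ∈ Finset.univ.filter (fun j => i < j), a j : ℕ) : ℤ))
        * f (Function.update γ i 1)
    else 0
  map_add' f g := by
    funext γ
    simp only [Pi.add_apply, ← Finset.sum_add_distrib]
    refine Finset.sum_congr rfl fun i _ => ?_
    split_ifs <;> ring
  map_smul' c f := by
    funext γ
    simp only [Pi.smul_apply, smul_eq_mul, RingHom.id_apply, Finset.mul_sum]
    refine Finset.sum_congr rfl fun i _ => ?_
    split_ifs <;> ring

/-- The action of `F` on `V(a_1) ⊗ ⋯ ⊗ V(a_l)` (via the iterated comultiplication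
`Δ(F) = F ⊗ 1 + K ⊗ F`, with the Koszul sign rule). -/
noncomputable def Fop (a : ℕ → ℕ) (n : ℕ) : Module.End K (V n) where
  toFun f := fun γ => ∑ i : Fin n,
    if γ i = 1 then
      ((-1 : K) ^ onesBefore γ i)
        * q ^ (∑ j ∈ Finset.univ.filter (fun j => j < i), a j)
        * f (Function.update γ i 0)
    else 0
  map_add' f g := by
    funext γ
    simp only [Pi.add_apply, ← Finset.sum_add_distrib]
    refine Finset.sum_congr rfl fun i _ => ?_
    split_ifs <;> ring
  map_smul' c f := by
    funext γ
    simp only [Pi.smul_apply, smul_eq_mul, RingHom.id_apply, Finset.mul_sum]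
    refine Finset.sum_congr rfl fun i _ => ?_
    split_ifs <;> ring

/-- The number of entries of `η` equal to `1` (the super degree of `v_η`). -/
def ones {m : ℕ} (η : Fin m → Fin 2) : ℕ := (Finset.univ.filter (fun i => η i = 1)).card

/-- The number of entries of `η` equal to `0`. -/
def zeros {m : ℕ} (η : Fin m → Fin 2) : ℕ := (Finset.univ.filter (fun i => η i = 0)).card

/-- The parity twist `x ↦ (-1)^{|x|}·x` (on homogeneous components). -/
noncomputable def twist {m : ℕ} (x : V m) : V m := fun η => (-1 : K) ^ ones η * x η

/-- The bar involution of `V(a_1) ⊗ ⋯ ⊗ V(a_m)`, defined inductively from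
`bar v^a_i = v^a_i` on each factor by `bar (w ⊗ w') = Θ'(bar w ⊗ bar w')` with
`Θ' = 1 + (q⁻¹ - q) E ⊗ F` (with the Koszul sign rule) and `bar q = q⁻¹`. -/
noncomputable def barV (a : ℕ → ℕ) : (m : ℕ) → V m → V m
  | 0, f => f
  | m + 1, f => fun γ =>
    if γ (Fin.last m) = 0 then
      barV a m (fun δ => f (Fin.snoc δ 0)) (fun i => γ i.castSucc)
    else
      barV a m (fun δ => f (Fin.snoc δ 1)) (fun i => γ i.castSucc)
        + (q⁻¹ - q) *
          Eop a m (twist (barV a m (fun δ => f (Fin.snoc δ 0)))) (fun i => γ i.castSucc)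

def s (n : ℕ) (i : Fin (n - 1)) : Equiv.Perm (Fin n) :=
  Equiv.swap ⟨(i : ℕ), by have := i.isLt; omega⟩ ⟨(i : ℕ) + 1, by have := i.isLt; omega⟩

def wordProd (n : ℕ) (l : List (Fin (n - 1))) : Equiv.Perm (Fin n) :=
  (l.map (s n)).prod

def len (n : ℕ) (w : Equiv.Perm (Fin n)) : ℕ :=
  sInf {k | ∃ l : List (Fin (n - 1)), l.length = k ∧ wordProd n l = w}

def bruhatLE (n : ℕ) (u w : Equiv.Perm (Fin n)) : Prop :=
  ∃ l : List (Fin (n - 1)), l.length = len n w ∧ wordProd n l = w ∧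
    ∃ t : List (Fin (n - 1)), t.Sublist l ∧ wordProd n t = u

def bruhatLT (n : ℕ) (u w : Equiv.Perm (Fin n)) : Prop :=
  bruhatLE n u w ∧ u ≠ w

/-- The parabolic subgroup of `S_n` generated by the simple transpositions indexed by `P`. -/
def parab (n : ℕ) (P : Finset (Fin (n - 1))) : Subgroup (Equiv.Perm (Fin n)) :=
  Subgroup.closure {σ | ∃ i ∈ P, σ = s n i}

/-- `w` is a shortest coset representative for `(S_k × S_{l-k}) \ S_l` (the parabolic
subgroup generated by all simple reflections except `s_k`). -/
def shortRep (l k : ℕ) (w : Equiv.Perm (Fin l)) : Prop :=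
  ∀ x ∈ parab l (Finset.univ.filter (fun i : Fin (l - 1) => (i : ℕ) + 1 ≠ k)),
    len l w ≤ len l (x * w)

/-- The minimal `{0,1}`-sequence `η_min = (0,…,0,1,…,1)` with `k` zeros. -/
def etaMin (l k : ℕ) : Fin l → Fin 2 := fun i => if (i : ℕ) < k then 0 else 1

/-- The partial order on the standard basis vectors of a weight space: within the weight
with `k` zeros, `η < γ` iff `η = η_min·u`, `γ = η_min·w` for shortest coset
representatives `u ≺ w` in the Bruhat order. -/
def seqLT (l k : ℕ) (η γ : Fin l → Fin 2) : Prop :=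
  ∃ u w : Equiv.Perm (Fin l), shortRep l k u ∧ shortRep l k w ∧ bruhatLT l u w ∧
    η = (fun i => etaMin l k (u i)) ∧ γ = (fun i => etaMin l k (w i))

/-- The bar involution of `V(a)`: the semilinear extension (with respect to the field
homomorphism `barK`, which implements `q ↦ q⁻¹`) of the map `barV` computing the bar
involution on the standard basis vectors. -/
noncomputable def barSemi (barK : K →+* K) (a : ℕ → ℕ) (l : ℕ) (f : V l) : V l :=
  barV a l (fun η => barK (f η))

/-- `v` is the canonical basis element `v^{◊a}_η` of `V(a)`: it is bar-invariant and
`v - v^a_η` is a `q·ℤ[q]`-linear combination of standard basis vectors strictly smaller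
than `v^a_η`. -/
def IsCanon (barK : K →+* K) (a : ℕ → ℕ) (l : ℕ) (η : Fin l → Fin 2) (v : V l) : Prop :=
  barSemi barK a l v = v ∧
  ∃ R : (Fin l → Fin 2) → Polynomial ℤ,
    (∀ γ, ¬ seqLT l (zeros η) γ η → R γ = 0) ∧
    v = eb η + ∑ γ : Fin l → Fin 2, (q * Polynomial.aeval q (R γ)) • eb γ

/-- The constant sequence `(1,1,…)`: all tensor factors are the vector representation. -/
def one' : ℕ → ℕ := fun _ => 1

/-- `w` is a shortest coset representative for `W_P \ S_n`. -/
def IsShort (n : ℕ) (P : Finset (Fin (n - 1))) (w : Equiv.Perm (Fin n)) : Prop :=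
  ∀ x ∈ parab n P, len n w ≤ len n (x * w)

/-- The indices of the simple reflections generating `W_q = ⟨s_1,…,s_{k-1}⟩` (0-based). -/
def Qset (n k : ℕ) : Finset (Fin (n - 1)) :=
  Finset.univ.filter (fun i => (i : ℕ) + 1 < k)

/-- The indices of the simple reflections generating `W_p = ⟨s_{k+1},…,s_{n-1}⟩` (0-based). -/
def Pset (n k : ℕ) : Finset (Fin (n - 1)) :=
  Finset.univ.filter (fun i => k ≤ (i : ℕ))

/-- `C` is the canonical basis of the mixed induced module with standard basis `N`
(indexed by the permutations satisfying `short`) and bar involution `barM`. -/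
def IsCanonBasis (n : ℕ) {M : Type} [AddCommGroup M] [Module K M]
    (short : Equiv.Perm (Fin n) → Prop) (N : Equiv.Perm (Fin n) → M)
    (barM : M → M) (C : Equiv.Perm (Fin n) → M) : Prop :=
  ∀ w, short w →
    barM (C w) = C w ∧
    ∃ R : Equiv.Perm (Fin n) → Polynomial ℤ,
      (∀ w', ¬ (short w' ∧ bruhatLT n w' w) → R w' = 0) ∧
      C w = N w + ∑ w' : Equiv.Perm (Fin n), (q * Polynomial.aeval q (R w')) • N w'

/-!
STATEMENT 10: Under the isomorphism `Ψ : M^p_q → (V^{⊗n})_k`, `N_w ↦ v_{η_min·w}`, the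
canonical basis element `N̲_w` of the mixed induced Hecke module `M^p_q` is mapped to
Lusztig's canonical basis element `v^◊_{η_min·w}` of `V^{⊗n}`, for every `w ∈ W^{p+q}`.

Here `W_q = ⟨s_1,…,s_{k-1}⟩`, `W_p = ⟨s_{k+1},…,s_{n-1}⟩`, the Hecke algebra with its
standard basis and bar involution is encoded as in the previous statements, the bar
involution of `V^{⊗n}` is the concrete `barV` (built from `Θ' = 1 + (q⁻¹-q)E⊗F`), and
Lusztig's canonical basis of the weight space is encoded by the predicate `IsCanon`.
-/

/-!
Let `Ψ` be the map `N_w ↦ v_{η_min·w}`. Since `N_1` and `v_{η_min}` satisfy the same relations and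
`H_i` acts on the two bases by the same formulas, `Ψ` intertwines the right multiplication by `H_i`
with the operator `Ȟ` on the tensor factors `i` and `i + 1`. The bar involution of `V^{⊗n}` fixes
`v_{η_min}`, on which all correction terms of `Θ'` vanish, and satisfies
`bar (Ȟ_i f) = Ȟ_i⁻¹ (bar f)`, because `Ȟ_i` commutes with `E`. As the `N_w` are obtained from `N_1`
by successive multiplications with the `H_i`, it follows that `Ψ` commutes with the two bar
involutions.

Hence `Ψ(N̲_w)` and `v^◊_{η_min·w}` are bar-invariant and both differ from `v_{η_min·w}` by a
`qℤ[q]`-combination of standard basis vectors. Their difference vanishes: the bar involution is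
unitriangular for the sum of the positions of the ones, so it would fix the lowest coefficient of a
nonzero difference up to `q ↦ q⁻¹`, whereas no nonzero element of `qℤ[q]` is invariant under
`q ↦ q⁻¹`.
-/

namespace SuperHecke

section Parameter

variable {barK : K →+* K}

lemma q_ne_zero : q ≠ 0 := RatFunc.X_ne_zero

lemma aeval_q_injective : Function.Injective (Polynomial.aeval (R := ℤ) q) :=
  transcendental_iff_injective.mp <|
    (RatFunc.transcendental_X (K := ℂ)).restrictScalars (algebraMap ℤ ℂ).injective_int

lemma q_sub_inv_ne_zero : q - q⁻¹ ≠ 0 := by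
  intro h
  have hsq : Polynomial.aeval q (Polynomial.X ^ 2 : Polynomial ℤ)
      = Polynomial.aeval q (1 : Polynomial ℤ) := by
    rw [map_pow, Polynomial.aeval_X, map_one, sq]
    nth_rewrite 2 [sub_eq_zero.mp h]
    exact mul_inv_cancel₀ q_ne_zero
  simpa using congrArg Polynomial.natDegree (aeval_q_injective hsq)

lemma qnum_one : qnum 1 = 1 := by
  rw [qnum, pow_one, pow_one, div_self q_sub_inv_ne_zero]

/-- The additive group `qℤ[q]`, in which the off-diagonal coefficients of a canonical basis lie. -/
def qInt : AddSubgroup K :=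
  ((AddMonoidHom.mulLeft q).comp (Polynomial.aeval q : Polynomial ℤ →ₐ[ℤ] K).toAddMonoidHom).range

lemma mul_aeval_mem_qInt (p : Polynomial ℤ) : q * Polynomial.aeval q p ∈ qInt := ⟨p, rfl⟩

lemma map_aeval_q (hbarK : barK q = q⁻¹) (p : Polynomial ℤ) :
    barK (Polynomial.aeval q p) = Polynomial.aeval q⁻¹ p := by
  rw [Polynomial.aeval_def, Polynomial.aeval_def, Polynomial.hom_eval₂,
    Subsingleton.elim (barK.comp (algebraMap ℤ K)) (algebraMap ℤ K), hbarK]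

lemma aeval_q_reverse (p : Polynomial ℤ) :
    Polynomial.aeval q p.reverse = q ^ p.natDegree * Polynomial.aeval q⁻¹ p := by
  let _ : Invertible q⁻¹ := invertibleOfNonzero (inv_ne_zero q_ne_zero)
  have h := Polynomial.eval₂_reverse_mul_pow (algebraMap ℤ K) q⁻¹ p
  rw [invOf_eq_inv, inv_inv, inv_pow] at h
  rw [Polynomial.aeval_def, Polynomial.aeval_def, ← h, mul_comm,
    inv_mul_cancel_right₀ (pow_ne_zero _ q_ne_zero)]

-- Invariance of `q * p` would force `p.reverse = X ^ (deg p + 2) * p`, which is too large a degree.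
lemma eq_zero_of_mem_qInt_of_bar_eq (hbarK : barK q = q⁻¹) {x : K}
    (hx : x ∈ qInt) (hbar : barK x = x) : x = 0 := by
  obtain ⟨p, rfl⟩ := hx
  suffices hp : p = 0 by simp [hp]
  have hinv : Polynomial.aeval q⁻¹ p = q * (q * Polynomial.aeval q p) := by
    have h : q⁻¹ * Polynomial.aeval q⁻¹ p = q * Polynomial.aeval q p := by
      rw [← map_aeval_q hbarK, ← hbarK, ← map_mul]
      exact hbar
    rw [← h, mul_inv_cancel_left₀ q_ne_zero]
  have hrev : p.reverse = Polynomial.X ^ (p.natDegree + 2) * p := by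
    apply aeval_q_injective
    rw [aeval_q_reverse, hinv, map_mul, map_pow, Polynomial.aeval_X]
    ring
  by_contra hp
  have hdeg := p.reverse_natDegree_le
  rw [hrev, Polynomial.natDegree_X_pow_mul _ hp] at hdeg
  omega

end Parameter

section TensorSpace

variable {m : ℕ}

lemma fin_two_cases (x : Fin 2) : x = 0 ∨ x = 1 := by omega

/-- The sequence `(δ, b)`, indexing the standard basis vector `v_δ ⊗ v_b` of `V^{⊗m} ⊗ V`. -/
def snoc (δ : Fin m → Fin 2) (b : Fin 2) : Fin (m + 1) → Fin 2 :=
  Fin.snoc (α := fun _ => Fin 2) δ b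

@[simp]
lemma snoc_castSucc (δ : Fin m → Fin 2) (b : Fin 2) (i : Fin m) : snoc δ b i.castSucc = δ i :=
  Fin.snoc_castSucc (α := fun _ => Fin 2) b δ i

@[simp]
lemma snoc_last (δ : Fin m → Fin 2) (b : Fin 2) : snoc δ b (Fin.last m) = b :=
  Fin.snoc_last (α := fun _ => Fin 2) b δ

lemma snoc_init_self (γ : Fin (m + 1) → Fin 2) :
    snoc (fun i => γ i.castSucc) (γ (Fin.last m)) = γ :=
  Fin.snoc_init_self (α := fun _ => Fin 2) γ

lemma snoc_inj {δ ε : Fin m → Fin 2} {b c : Fin 2} : snoc δ b = snoc ε c ↔ δ = ε ∧ b = c :=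
  Fin.snoc_inj (α := fun _ => Fin 2)

lemma update_snoc_castSucc (δ : Fin m → Fin 2) (b c : Fin 2) (i : Fin m) :
    Function.update (snoc δ b) i.castSucc c = snoc (Function.update δ i c) b :=
  (Fin.snoc_update (α := fun _ => Fin 2) b δ i c).symm

lemma update_snoc_last (δ : Fin m → Fin 2) (b c : Fin 2) :
    Function.update (snoc δ b) (Fin.last m) c = snoc δ c :=
  Fin.update_snoc_last (α := fun _ => Fin 2) b δ c

/-- The component `f_b` of `f = f_0 ⊗ v_0 + f_1 ⊗ v_1 ∈ V^{⊗m} ⊗ V`. -/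
def slice (b : Fin 2) : V (m + 1) →ₗ[K] V m := LinearMap.funLeft K K fun δ => snoc δ b

lemma slice_apply (b : Fin 2) (f : V (m + 1)) (δ : Fin m → Fin 2) :
    slice b f δ = f (snoc δ b) := rfl

lemma slice_ext {f g : V (m + 1)} (h₀ : slice 0 f = slice 0 g) (h₁ : slice 1 f = slice 1 g) :
    f = g := by
  funext γ
  rw [← snoc_init_self γ]
  rcases fin_two_cases (γ (Fin.last m)) with h | h <;> rw [h]
  exacts [congrFun h₀ _, congrFun h₁ _]

lemma slice_eb (δ : Fin m → Fin 2) (b c : Fin 2) :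
    slice c (eb (snoc δ b)) = if c = b then eb δ else 0 := by
  funext ε
  by_cases h : c = b <;> simp [slice_apply, eb, snoc_inj, h]

lemma ones_snoc (δ : Fin m → Fin 2) (b : Fin 2) :
    ones (snoc δ b) = ones δ + if b = 1 then 1 else 0 := by
  simp only [ones, Finset.card_filter]
  rw [Fin.sum_univ_castSucc]
  simp only [snoc_castSucc, snoc_last]

lemma onesBefore_snoc_castSucc (δ : Fin m → Fin 2) (b : Fin 2) (i : Fin m) :
    onesBefore (snoc δ b) i.castSucc = onesBefore δ i := by
  simp only [onesBefore, Finset.card_filter]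
  rw [Fin.sum_univ_castSucc]
  simp [Fin.le_last]

lemma onesBefore_snoc_last (δ : Fin m → Fin 2) (b : Fin 2) :
    onesBefore (snoc δ b) (Fin.last m) = ones δ := by
  simp only [onesBefore, ones, Finset.card_filter]
  rw [Fin.sum_univ_castSucc]
  simp

lemma slice_zero_twist (f : V (m + 1)) : slice 0 (twist f) = twist (slice 0 f) := by
  funext δ
  simp [twist, slice_apply, ones_snoc]

lemma slice_one_twist (f : V (m + 1)) : slice 1 (twist f) = -twist (slice 1 f) := by
  funext δ
  simp [twist, slice_apply, ones_snoc, pow_succ]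

/-- The sum of the positions of the ones of a sequence, a grading by which the bar involution of
`V^{⊗m}` is unitriangular. -/
def positionSum (γ : Fin m → Fin 2) : ℕ := ∑ i : Fin m, if γ i = 1 then (i : ℕ) else 0

lemma positionSum_snoc (δ : Fin m → Fin 2) (b : Fin 2) :
    positionSum (snoc δ b) = positionSum δ + if b = 1 then m else 0 := by
  rw [positionSum, Fin.sum_univ_castSucc]
  simp only [snoc_castSucc, snoc_last, Fin.val_castSucc, Fin.val_last, positionSum]

lemma positionSum_update {γ : Fin m → Fin 2} {i : Fin m} (h : γ i = 0) :
    positionSum (Function.update γ i 1) = positionSum γ + i := by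
  rw [positionSum, positionSum, ← Finset.add_sum_erase _ _ (Finset.mem_univ i),
    ← Finset.add_sum_erase _ (fun j => if γ j = 1 then (j : ℕ) else 0) (Finset.mem_univ i),
    Finset.sum_congr rfl fun j hj => by rw [Function.update_of_ne (Finset.ne_of_mem_erase hj)]]
  simp [h, add_comm]

end TensorSpace

section Raising

variable (a : ℕ → ℕ) {m : ℕ}

lemma Eop_apply (f : V m) (γ : Fin m → Fin 2) :
    Eop a m f γ = ∑ i : Fin m, if γ i = 0 then
      ((-1 : K) ^ onesBefore γ i) * qnum (a i)
        * q ^ (-((∑ j ∈ Finset.univ.filter (fun j => i < j), a j : ℕ) : ℤ))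
        * f (Function.update γ i 1)
    else 0 := rfl

lemma sum_gt_castSucc (i : Fin m) :
    ∑ j ∈ Finset.univ.filter (fun j : Fin (m + 1) => i.castSucc < j), a j
      = ∑ j ∈ Finset.univ.filter (fun j : Fin m => i < j), a j + a m := by
  rw [Finset.sum_filter, Finset.sum_filter, Fin.sum_univ_castSucc]
  simp

lemma Eop_snoc (f : V (m + 1)) (δ : Fin m → Fin 2) (b : Fin 2) :
    Eop a (m + 1) f (snoc δ b) = q⁻¹ ^ a m * Eop a m (slice b f) δ
      + if b = 0 then (-1) ^ ones δ * qnum (a m) * f (snoc δ 1) else 0 := by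
  rw [Eop_apply, Fin.sum_univ_castSucc, Eop_apply, Finset.mul_sum]
  congr 1
  · refine Finset.sum_congr rfl fun i _ => ?_
    rw [snoc_castSucc, onesBefore_snoc_castSucc, update_snoc_castSucc, sum_gt_castSucc,
      Nat.cast_add, neg_add, zpow_add₀ q_ne_zero, zpow_neg q (a m), zpow_natCast, ← inv_pow,
      slice_apply, Fin.val_castSucc]
    split_ifs <;> ring
  · have hempty : Finset.univ.filter (fun j : Fin (m + 1) => Fin.last m < j) = ∅ :=
      Finset.filter_eq_empty_iff.mpr fun j _ => (Fin.le_last j).not_gt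
    rw [snoc_last, onesBefore_snoc_last, update_snoc_last, hempty]
    simp

/-- `x ↦ E ((-1)^{|x|} x)`: the operator through which `Θ' - 1` acts on the left tensor factor,
the Koszul sign being absorbed. -/
def twistedE (m : ℕ) : V m →ₗ[K] V m :=
  Eop a m ∘ₗ
    { toFun := twist
      map_add' := fun f g => by funext δ; simp [twist, mul_add]
      map_smul' := fun c f => by funext δ; simp [twist, mul_left_comm] }

lemma twistedE_apply (f : V m) : twistedE a m f = Eop a m (twist f) := rfl

lemma slice_zero_twistedE (f : V (m + 1)) :
    slice 0 (twistedE a (m + 1) f)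
      = q⁻¹ ^ a m • twistedE a m (slice 0 f) - qnum (a m) • slice 1 f := by
  funext δ
  have hsign : (-1 : K) ^ ones δ * (-1) ^ ones δ = 1 := by rw [← mul_pow]; simp
  have htwist : twist f (snoc δ 1) = -(-1) ^ ones δ * slice 1 f δ := by
    rw [twist, ones_snoc, if_pos rfl, pow_succ, slice_apply]; ring
  rw [slice_apply, twistedE_apply, Eop_snoc, slice_zero_twist, if_pos rfl, htwist]
  simp only [Pi.sub_apply, Pi.smul_apply, smul_eq_mul, twistedE_apply]
  linear_combination (-qnum (a m) * slice 1 f δ) * hsign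

lemma slice_one_twistedE (f : V (m + 1)) :
    slice 1 (twistedE a (m + 1) f) = -(q⁻¹ ^ a m • twistedE a m (slice 1 f)) := by
  funext δ
  rw [slice_apply, twistedE_apply, Eop_snoc, slice_one_twist]
  simp [twistedE_apply]

lemma twistedE_twistedE : ∀ {m : ℕ} (f : V m), twistedE a m (twistedE a m f) = 0
  | 0, f => by funext δ; simp [twistedE_apply, Eop_apply]
  | m + 1, f => by
    apply slice_ext
    · simp only [slice_zero_twistedE, slice_one_twistedE, map_sub, map_smul,
        twistedE_twistedE (slice 0 f), smul_neg, smul_sub, smul_zero,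
        smul_comm (qnum (a m)), map_zero]
      abel
    · simp only [slice_one_twistedE, map_neg, map_smul, twistedE_twistedE (slice 1 f), map_zero,
        smul_zero, neg_zero]

lemma twistedE_apply_eq_zero {f : V m} {δ : Fin m → Fin 2}
    (h : ∀ i, δ i = 0 → f (Function.update δ i 1) = 0) : twistedE a m f δ = 0 := by
  rw [twistedE_apply, Eop_apply]
  refine Finset.sum_eq_zero fun i _ => ?_
  split_ifs with hi
  · rw [twist, h i hi, mul_zero, mul_zero]
  · rfl

end Raising

section BarInvolution

variable (barK : K →+* K) (a : ℕ → ℕ) {m : ℕ}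

lemma slice_zero_barSemi (f : V (m + 1)) :
    slice 0 (barSemi barK a (m + 1) f) = barSemi barK a m (slice 0 f) := by
  funext δ
  simp only [slice_apply, barSemi, barV, snoc_last, snoc_castSucc, if_true]
  rfl

lemma slice_one_barSemi (f : V (m + 1)) :
    slice 1 (barSemi barK a (m + 1) f) = barSemi barK a m (slice 1 f)
      + (q⁻¹ - q) • twistedE a m (barSemi barK a m (slice 0 f)) := by
  funext δ
  simp only [slice_apply, barSemi, barV, snoc_last, snoc_castSucc, one_ne_zero, if_false]
  rfl

lemma barSemi_add (f g : V m) :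
    barSemi barK a m (f + g) = barSemi barK a m f + barSemi barK a m g := by
  induction m with
  | zero => funext δ; exact map_add barK (f δ) (g δ)
  | succ m ih =>
    apply slice_ext
    · simp only [map_add, slice_zero_barSemi, ih]
    · simp only [map_add, slice_one_barSemi, ih, smul_add]
      abel

lemma barSemi_smul (c : K) (f : V m) :
    barSemi barK a m (c • f) = barK c • barSemi barK a m f := by
  induction m with
  | zero => funext δ; exact map_mul barK c (f δ)
  | succ m ih =>
    apply slice_ext
    · simp only [map_smul, slice_zero_barSemi, ih]
    · simp only [map_smul, slice_one_barSemi, ih, smul_add, smul_comm (barK c)]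

/-- The bar involution `barSemi` as a semilinear map. -/
def barLin (m : ℕ) : V m →ₛₗ[barK] V m where
  toFun := barSemi barK a m
  map_add' := barSemi_add barK a
  map_smul' c := barSemi_smul barK a c

lemma barLin_apply (f : V m) : barLin barK a m f = barSemi barK a m f := rfl

lemma slice_zero_barLin (f : V (m + 1)) :
    slice 0 (barLin barK a (m + 1) f) = barLin barK a m (slice 0 f) :=
  slice_zero_barSemi barK a f

lemma slice_one_barLin (f : V (m + 1)) :
    slice 1 (barLin barK a (m + 1) f) = barLin barK a m (slice 1 f)
      + (q⁻¹ - q) • twistedE a m (barLin barK a m (slice 0 f)) :=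
  slice_one_barSemi barK a f

-- `E` moves a `0` to a `1`, so the correction term of `Θ'` only involves smaller position sums.
lemma barLin_apply_eq_of_forall_positionSum_lt : ∀ {m : ℕ} {f : V m} {γ : Fin m → Fin 2},
    (∀ δ, positionSum δ < positionSum γ → f δ = 0) → barLin barK a m f γ = barK (f γ)
  | 0, _, _, _ => rfl
  | m + 1, f, γ, h => by
    obtain ⟨δ, b, rfl⟩ : ∃ δ b, snoc δ b = γ := ⟨_, _, snoc_init_self γ⟩
    rcases fin_two_cases b with rfl | rfl <;> simp only [positionSum_snoc, ← slice_apply] at h ⊢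
    · rw [slice_zero_barLin]
      refine barLin_apply_eq_of_forall_positionSum_lt fun ε hε => h _ ?_
      simpa [positionSum_snoc] using hε
    · have hslice₀ : ∀ ε, positionSum ε < positionSum δ + m → slice 0 f ε = 0 := fun ε hε =>
        h _ (by simpa [positionSum_snoc] using hε)
      have hE : twistedE a m (barLin barK a m (slice 0 f)) δ = 0 := by
        refine twistedE_apply_eq_zero a fun i hi => ?_
        have hlt : positionSum (Function.update δ i 1) < positionSum δ + m := by
          rw [positionSum_update hi]; omega
        rw [barLin_apply_eq_of_forall_positionSum_lt fun ε hε => hslice₀ ε (hε.trans hlt),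
          hslice₀ _ hlt, map_zero]
      rw [slice_one_barLin, Pi.add_apply, Pi.smul_apply, hE, smul_zero, add_zero]
      refine barLin_apply_eq_of_forall_positionSum_lt fun ε hε => h _ ?_
      simpa [positionSum_snoc] using hε

lemma etaMin_succ (m k : ℕ) :
    etaMin (m + 1) k = snoc (etaMin m k) (if m < k then 0 else 1) := by
  funext i
  induction i using Fin.lastCases <;> simp [etaMin]

lemma twistedE_eb_etaMin_of_le {m k : ℕ} (h : m ≤ k) : twistedE a m (eb (etaMin m k)) = 0 := by
  funext δ
  refine twistedE_apply_eq_zero a fun i _ => if_neg fun hδ => ?_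
  have hi := congrFun hδ i
  rw [Function.update_self, etaMin, if_pos (i.isLt.trans_le h)] at hi
  exact one_ne_zero hi

lemma barLin_eb_etaMin (m k : ℕ) : barLin barK a m (eb (etaMin m k)) = eb (etaMin m k) := by
  induction m with
  | zero => funext γ; simp [barLin_apply, barSemi, barV, eb, Subsingleton.elim γ (etaMin 0 k)]
  | succ m ih =>
    rw [etaMin_succ]
    by_cases h : m < k
    · rw [if_pos h]
      apply slice_ext <;> simp [slice_zero_barLin, slice_one_barLin, slice_eb, ih,
        twistedE_eb_etaMin_of_le a h.le]
    · rw [if_neg h]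
      apply slice_ext <;> simp [slice_zero_barLin, slice_one_barLin, slice_eb, ih]

/-- The `qℤ[q]`-span of the standard basis of `V^{⊗m}`. -/
def qLattice (m : ℕ) : AddSubgroup (V m) := AddSubgroup.pi Set.univ fun _ => qInt

variable {barK}

lemma eq_zero_of_mem_qLattice_of_barLin_eq (hbarK : barK q = q⁻¹) {x : V m}
    (hx : x ∈ qLattice m) (hbar : barLin barK a m x = x) : x = 0 := by
  funext γ
  induction hN : positionSum γ using Nat.strong_induction_on generalizing γ with
  | _ N ih =>
    refine eq_zero_of_mem_qInt_of_bar_eq hbarK (hx γ (Set.mem_univ γ)) ?_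
    rw [← barLin_apply_eq_of_forall_positionSum_lt barK a fun δ hδ => ih _ (hN ▸ hδ) δ rfl, hbar]

end BarInvolution

section HeckeOperator

variable {m : ℕ}

/-- The Hecke operator `Ȟ` on the tensor factors `a` and `b`; the action of `H_i` on `V^{⊗n}` is
the case of two adjacent factors. -/
def heckeOp (a b : Fin m) : V m →ₗ[K] V m where
  toFun f γ :=
    if γ a = γ b then (if γ a = 0 then q⁻¹ else -q) * f γ
    else f (γ ∘ Equiv.swap a b) + (if γ a = 1 then q⁻¹ - q else 0) * f γ
  map_add' f g := by
    funext γ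
    simp only [Pi.add_apply]
    split_ifs <;> ring
  map_smul' c f := by
    funext γ
    simp only [Pi.smul_apply, smul_eq_mul, RingHom.id_apply]
    split_ifs <;> ring

lemma heckeOp_apply (a b : Fin m) (f : V m) (γ : Fin m → Fin 2) :
    heckeOp a b f γ =
      if γ a = γ b then (if γ a = 0 then q⁻¹ else -q) * f γ
      else f (γ ∘ Equiv.swap a b) + (if γ a = 1 then q⁻¹ - q else 0) * f γ := rfl

lemma comp_swap_comp_swap {α β : Type*} [DecidableEq α] (γ : α → β) (a b : α) :
    (γ ∘ Equiv.swap a b) ∘ Equiv.swap a b = γ := by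
  funext x
  simp

lemma heckeOp_eb_of_eq {a b : Fin m} {η : Fin m → Fin 2} (h : η a = η b) :
    heckeOp a b (eb η) = (if η a = 0 then q⁻¹ else -q) • eb η := by
  funext γ
  rw [heckeOp_apply, Pi.smul_apply, smul_eq_mul]
  by_cases hγ : γ = η
  · subst hγ
    rw [if_pos h]
  · have hswap : γ a ≠ γ b → γ ∘ Equiv.swap a b ≠ η := by
      rintro hne rfl
      simp only [Function.comp_apply, Equiv.swap_apply_left, Equiv.swap_apply_right] at h
      exact hne h.symm
    simp +contextual [eb, hγ, hswap]

lemma heckeOp_eb_of_zero_one {a b : Fin m} {η : Fin m → Fin 2} (ha : η a = 0) (hb : η b = 1) :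
    heckeOp a b (eb η) = eb (η ∘ Equiv.swap a b) := by
  have hswap (γ : Fin m → Fin 2) : γ ∘ Equiv.swap a b = η ↔ γ = η ∘ Equiv.swap a b := by
    constructor <;> rintro rfl <;> rw [comp_swap_comp_swap]
  have hη (γ : Fin m → Fin 2) (h : γ a = γ b ∨ γ a = 1) : γ ≠ η := by
    rintro rfl
    simp [ha, hb] at h
  have hη' (γ : Fin m → Fin 2) (h : γ a = γ b) : γ ≠ η ∘ Equiv.swap a b := by
    rintro rfl
    simp [ha, hb] at h
  funext γ
  rw [heckeOp_apply]
  split_ifs with h h₁ h₁ <;> simp [eb, hswap, hη', hη, h, h₁]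

lemma heckeOp_heckeOp (a b : Fin m) (f : V m) :
    heckeOp a b (heckeOp a b f) = (q⁻¹ - q) • heckeOp a b f + f := by
  have hq := q_ne_zero
  funext γ
  simp only [heckeOp_apply, Pi.add_apply, Pi.smul_apply, smul_eq_mul, comp_swap_comp_swap,
    Function.comp_apply, Equiv.swap_apply_left, Equiv.swap_apply_right]
  rcases fin_two_cases (γ a) with ha | ha <;> rcases fin_two_cases (γ b) with hb | hb <;>
    simp only [ha, hb, zero_ne_one, one_ne_zero, if_true, if_false, zero_mul, add_zero] <;>
    field_simp <;> ring

lemma snoc_comp_swap (δ : Fin m → Fin 2) (c : Fin 2) (a b : Fin m) :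
    snoc δ c ∘ Equiv.swap a.castSucc b.castSucc = snoc (δ ∘ Equiv.swap a b) c := by
  funext x
  induction x using Fin.lastCases with
  | last => simp [Equiv.swap_apply_of_ne_of_ne, (Fin.castSucc_lt_last _).ne']
  | cast x =>
    rw [Function.comp_apply, snoc_castSucc, Function.comp_apply, ← snoc_castSucc δ c,
      Fin.castSucc_injective m |>.swap_apply]

lemma snoc_snoc_comp_swap (δ : Fin m → Fin 2) (c d : Fin 2) :
    snoc (snoc δ c) d ∘ Equiv.swap (Fin.last m).castSucc (Fin.last (m + 1))
      = snoc (snoc δ d) c := by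
  funext x
  induction x using Fin.lastCases with
  | last => simp
  | cast x =>
    induction x using Fin.lastCases with
    | last => simp
    | cast x => simp [Equiv.swap_apply_of_ne_of_ne, (Fin.castSucc_lt_last _).ne]

lemma slice_heckeOp (c : Fin 2) (a b : Fin m) (f : V (m + 1)) :
    slice c (heckeOp a.castSucc b.castSucc f) = heckeOp a b (slice c f) := by
  funext δ
  simp only [slice_apply, heckeOp_apply, snoc_castSucc, snoc_comp_swap]

lemma slice_slice_heckeOp_last_of_eq (c : Fin 2) (f : V (m + 2)) :
    slice c (slice c (heckeOp (Fin.last m).castSucc (Fin.last (m + 1)) f))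
      = (if c = 0 then q⁻¹ else -q) • slice c (slice c f) := by
  funext δ
  simp [slice_apply, heckeOp_apply]

lemma slice_slice_heckeOp_last_of_ne {c d : Fin 2} (hcd : c ≠ d) (f : V (m + 2)) :
    slice c (slice d (heckeOp (Fin.last m).castSucc (Fin.last (m + 1)) f))
      = slice d (slice c f) + (if c = 1 then q⁻¹ - q else 0) • slice c (slice d f) := by
  funext δ
  simp only [slice_apply, heckeOp_apply, Pi.add_apply, Pi.smul_apply, smul_eq_mul,
    snoc_castSucc, snoc_last, if_neg hcd, snoc_snoc_comp_swap]

@[elab_as_elim]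
lemma adjacent_induction {P : ∀ (m : ℕ) (a b : Fin m), (b : ℕ) = a + 1 → Prop}
    (last : ∀ m, P (m + 2) (Fin.last m).castSucc (Fin.last (m + 1)) rfl)
    (castSucc : ∀ (m : ℕ) (a b : Fin m) (h : (b : ℕ) = a + 1),
      P m a b h → P (m + 1) a.castSucc b.castSucc h)
    (m : ℕ) (a b : Fin m) (h : (b : ℕ) = a + 1) : P m a b h := by
  induction m with
  | zero => exact a.elim0
  | succ m ih =>
    induction b using Fin.lastCases with
    | last =>
      obtain ⟨m, rfl⟩ : ∃ l, m = l + 1 := ⟨a, by simpa using h⟩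
      obtain rfl : a = (Fin.last m).castSucc := Fin.ext (by simpa using h.symm)
      exact last m
    | cast b =>
      obtain ⟨a, rfl⟩ : ∃ a' : Fin m, a'.castSucc = a :=
        ⟨⟨a, by rw [Fin.val_castSucc] at h; omega⟩, rfl⟩
      exact castSucc m a b h (ih a b h)

lemma twistedE_heckeOp {a b : Fin m} (h : (b : ℕ) = a + 1) (f : V m) :
    twistedE one' m (heckeOp a b f) = heckeOp a b (twistedE one' m f) := by
  have hq := q_ne_zero
  induction m, a, b, h using adjacent_induction with
  | last m =>
    apply slice_ext <;> apply slice_ext <;> funext δ <;>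
      simp only [slice_zero_twistedE, slice_one_twistedE, slice_slice_heckeOp_last_of_eq,
        slice_slice_heckeOp_last_of_ne, ne_eq, zero_ne_one, one_ne_zero, not_false_eq_true,
        map_add, map_sub, map_neg, map_smul, one', qnum_one, pow_one, if_true, if_false,
        Pi.add_apply, Pi.sub_apply, Pi.neg_apply, Pi.smul_apply, smul_eq_mul] <;>
      field_simp <;> ring
  | castSucc m a b _ ih =>
    apply slice_ext <;>
      simp only [slice_zero_twistedE, slice_one_twistedE, slice_heckeOp, ih, map_sub, map_neg,
        map_smul]

variable {barK : K →+* K}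

-- The operator `heckeOp a b - (q⁻¹ - q)` is the inverse of `heckeOp a b`.
lemma barLin_heckeOp (hbarK : barK q = q⁻¹) {a b : Fin m} (h : (b : ℕ) = a + 1) (f : V m) :
    barLin barK one' m (heckeOp a b f)
      = heckeOp a b (barLin barK one' m f) - (q⁻¹ - q) • barLin barK one' m f := by
  have hq := q_ne_zero
  induction m, a, b, h using adjacent_induction with
  | last m =>
    apply slice_ext <;> apply slice_ext <;> funext δ <;>
      simp only [slice_zero_barLin, slice_one_barLin, slice_zero_twistedE, slice_one_twistedE,
        slice_slice_heckeOp_last_of_eq, slice_slice_heckeOp_last_of_ne, ne_eq, zero_ne_one,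
        one_ne_zero, not_false_eq_true, map_add, map_sub, map_neg, map_smul, map_smulₛₗ, hbarK,
        map_inv₀, twistedE_twistedE, one', qnum_one, pow_one, if_true, if_false, map_zero,
        Pi.add_apply, Pi.sub_apply, Pi.neg_apply, Pi.smul_apply, Pi.zero_apply, smul_eq_mul] <;>
      field_simp <;> ring
  | castSucc m a b h ih =>
    apply slice_ext <;>
      simp only [slice_zero_barLin, slice_one_barLin, slice_heckeOp, ih, twistedE_heckeOp h,
        map_add, map_sub, map_smul, smul_add, smul_sub]
    abel

end HeckeOperator

section Permutations

variable {n : ℕ}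

/-- The left one of the two adjacent positions exchanged by the simple transposition `s n i`. -/
def leftPos (i : Fin (n - 1)) : Fin n := ⟨i, by omega⟩

/-- The right one of the two adjacent positions exchanged by the simple transposition `s n i`. -/
def rightPos (i : Fin (n - 1)) : Fin n := ⟨i + 1, by omega⟩

lemma s_eq_swap (i : Fin (n - 1)) : s n i = Equiv.swap (leftPos i) (rightPos i) := rfl

lemma val_rightPos (i : Fin (n - 1)) : (rightPos i : ℕ) = leftPos i + 1 := rfl

lemma leftPos_lt_rightPos (i : Fin (n - 1)) : leftPos i < rightPos i := Nat.lt_succ_self i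

@[simp]
lemma s_leftPos (i : Fin (n - 1)) : s n i (leftPos i) = rightPos i := Equiv.swap_apply_left _ _

@[simp]
lemma s_rightPos (i : Fin (n - 1)) : s n i (rightPos i) = leftPos i := Equiv.swap_apply_right _ _

lemma s_inv (i : Fin (n - 1)) : (s n i)⁻¹ = s n i := Equiv.swap_inv _ _

lemma mul_s_mul_s (w : Equiv.Perm (Fin n)) (i : Fin (n - 1)) : w * s n i * s n i = w := by
  rw [mul_assoc, s_eq_swap, Equiv.swap_mul_self, mul_one]

lemma lt_of_forall_leftPos_lt_rightPos {α : Type*} [Preorder α] {f : Fin n → α} {u v : Fin n}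
    (huv : u < v)
    (h : ∀ i : Fin (n - 1), u ≤ leftPos i → rightPos i ≤ v → f (leftPos i) < f (rightPos i)) :
    f u < f v := by
  obtain ⟨d, hd⟩ : ∃ d, (v : ℕ) = u + d + 1 := ⟨v - u - 1, by have : (u : ℕ) < v := huv; omega⟩
  induction d generalizing v with
  | zero =>
    have hv : v = rightPos ⟨u, by omega⟩ := Fin.ext hd
    rw [hv]
    exact h ⟨u, by omega⟩ le_rfl hv.ge
  | succ d ih =>
    obtain ⟨i, rfl⟩ : ∃ i : Fin (n - 1), v = rightPos i := ⟨⟨u + d + 1, by omega⟩, Fin.ext hd⟩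
    have hleft : (leftPos i : ℕ) = u + d + 1 := Nat.succ_injective hd
    have hu : u < leftPos i := Fin.lt_def.mpr (by omega)
    have hi := leftPos_lt_rightPos i
    exact (ih hu (fun j hj hj' => h j hj (hj'.trans hi.le)) hleft).trans (h i hu.le le_rfl)

lemma s_lt_s_iff (i : Fin (n - 1)) {x y : Fin n} (h₁ : ¬(x = leftPos i ∧ y = rightPos i))
    (h₂ : ¬(x = rightPos i ∧ y = leftPos i)) : s n i x < s n i y ↔ x < y := by
  have hi := val_rightPos i
  rw [s_eq_swap, Equiv.swap_apply_def, Equiv.swap_apply_def]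
  simp only [Fin.ext_iff] at h₁ h₂
  split_ifs <;> simp only [Fin.ext_iff, Fin.lt_def] at * <;> omega

/-- The inversions of a permutation, as pairs of positions. -/
def inversions (w : Equiv.Perm (Fin n)) : Finset (Fin n × Fin n) :=
  Finset.univ.filter fun p => p.1 < p.2 ∧ w p.2 < w p.1

lemma mem_inversions {w : Equiv.Perm (Fin n)} {x y : Fin n} :
    (x, y) ∈ inversions w ↔ x < y ∧ w y < w x := by simp [inversions]

lemma card_inversions_one : (inversions (1 : Equiv.Perm (Fin n))).card = 0 := by
  rw [Finset.card_eq_zero]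
  exact Finset.filter_eq_empty_iff.mpr fun p _ hp => hp.1.asymm hp.2

lemma card_inversions_inv (w : Equiv.Perm (Fin n)) :
    (inversions w⁻¹).card = (inversions w).card := by
  refine Finset.card_bij' (fun p _ => (w⁻¹ p.2, w⁻¹ p.1)) (fun p _ => (w p.2, w p.1)) ?_ ?_
    (by simp) (by simp)
  all_goals
    rintro ⟨x, y⟩ h
    rw [mem_inversions] at h ⊢
    simpa using h.symm

lemma inversions_mul_s {w : Equiv.Perm (Fin n)} {i : Fin (n - 1)}
    (h : w (leftPos i) < w (rightPos i)) :
    inversions (w * s n i) = insert (leftPos i, rightPos i)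
      ((inversions w).map (Equiv.prodCongr (s n i) (s n i)).toEmbedding) := by
  have hlt := leftPos_lt_rightPos i
  ext ⟨x, y⟩
  have hsymm : (Equiv.prodCongr (s n i) (s n i)).symm (x, y) = (s n i x, s n i y) := by
    simp [s_eq_swap]
  rw [Finset.mem_insert, Finset.mem_map_equiv, hsymm, mem_inversions, mem_inversions]
  by_cases h₁ : x = leftPos i ∧ y = rightPos i
  · obtain ⟨rfl, rfl⟩ := h₁
    simp [hlt, h]
  · by_cases h₂ : x = rightPos i ∧ y = leftPos i
    · obtain ⟨rfl, rfl⟩ := h₂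
      simp [hlt.ne', h.le]
    · simp only [s_lt_s_iff i h₁ h₂, Prod.mk.injEq, h₁, false_or, Equiv.Perm.mul_apply]

lemma card_inversions_mul_s_of_lt {w : Equiv.Perm (Fin n)} {i : Fin (n - 1)}
    (h : w (leftPos i) < w (rightPos i)) :
    (inversions (w * s n i)).card = (inversions w).card + 1 := by
  rw [inversions_mul_s h, Finset.card_insert_of_notMem, Finset.card_map]
  rw [Finset.mem_map_equiv]
  simp [s_eq_swap, mem_inversions, (leftPos_lt_rightPos i).le]

lemma card_inversions_of_gt {w : Equiv.Perm (Fin n)} {i : Fin (n - 1)}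
    (h : w (rightPos i) < w (leftPos i)) :
    (inversions w).card = (inversions (w * s n i)).card + 1 := by
  rw [← card_inversions_mul_s_of_lt (i := i) (by simpa using h), mul_s_mul_s]

lemma exists_descent {w : Equiv.Perm (Fin n)} (hw : w ≠ 1) :
    ∃ i : Fin (n - 1), w (rightPos i) < w (leftPos i) := by
  contrapose! hw
  refine (Equiv.Perm.monotone_iff w).mp (StrictMono.monotone fun u v huv => ?_)
  exact lt_of_forall_leftPos_lt_rightPos huv fun i _ _ =>
    (hw i).lt_of_ne (w.injective.ne (leftPos_lt_rightPos i).ne)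

@[elab_as_elim]
lemma descent_induction {P : Equiv.Perm (Fin n) → Prop} (one : P 1)
    (mul_s : ∀ w i, w (leftPos i) < w (rightPos i) → P w → P (w * s n i))
    (w : Equiv.Perm (Fin n)) : P w := by
  induction hN : (inversions w).card generalizing w with
  | zero =>
    suffices hw : w = 1 from hw ▸ one
    by_contra hw
    obtain ⟨i, hi⟩ := exists_descent hw
    exact Nat.succ_ne_zero _ ((card_inversions_of_gt hi).symm.trans hN)
  | succ N ih =>
    have hw : w ≠ 1 := by
      rintro rfl
      exact Nat.succ_ne_zero N (hN.symm.trans card_inversions_one)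
    obtain ⟨i, hi⟩ := exists_descent hw
    rw [← mul_s_mul_s w i]
    refine mul_s _ i (by simpa using hi) (ih _ ?_)
    rw [card_inversions_of_gt hi] at hN
    exact Nat.succ_injective hN

lemma card_inversions_mul_s_le (w : Equiv.Perm (Fin n)) (i : Fin (n - 1)) :
    (inversions (w * s n i)).card ≤ (inversions w).card + 1 := by
  rcases (w.injective.ne (leftPos_lt_rightPos i).ne).lt_or_gt with h | h
  · exact (card_inversions_mul_s_of_lt h).le
  · have := card_inversions_of_gt h
    omega

lemma wordProd_concat (l : List (Fin (n - 1))) (i : Fin (n - 1)) :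
    wordProd n (l ++ [i]) = wordProd n l * s n i := by simp [wordProd]

lemma card_inversions_wordProd_le (l : List (Fin (n - 1))) :
    (inversions (wordProd n l)).card ≤ l.length := by
  induction l using List.reverseRecOn with
  | nil => exact card_inversions_one.le
  | append_singleton l i ih =>
    rw [wordProd_concat, List.length_append, List.length_singleton]
    exact (card_inversions_mul_s_le _ i).trans (Nat.succ_le_succ ih)

lemma exists_reduced_word (w : Equiv.Perm (Fin n)) :
    ∃ l : List (Fin (n - 1)), l.length = (inversions w).card ∧ wordProd n l = w := by
  induction w using descent_induction with
  | one => exact ⟨[], card_inversions_one.symm, rfl⟩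
  | mul_s w i hi ih =>
    obtain ⟨l, hlen, hprod⟩ := ih
    refine ⟨l ++ [i], ?_, by rw [wordProd_concat, hprod]⟩
    rw [List.length_append, hlen, List.length_singleton, card_inversions_mul_s_of_lt hi]

lemma len_eq_card_inversions (w : Equiv.Perm (Fin n)) : len n w = (inversions w).card := by
  refine IsLeast.csInf_eq ⟨exists_reduced_word w, ?_⟩
  rintro _ ⟨l, rfl, rfl⟩
  exact card_inversions_wordProd_le l

lemma len_mul_s_of_lt {w : Equiv.Perm (Fin n)} {i : Fin (n - 1)}
    (h : w (leftPos i) < w (rightPos i)) : len n (w * s n i) = len n w + 1 := by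
  rw [len_eq_card_inversions, len_eq_card_inversions, card_inversions_mul_s_of_lt h]

lemma len_mul_s_le (w : Equiv.Perm (Fin n)) (i : Fin (n - 1)) :
    len n (w * s n i) ≤ len n w + 1 := by
  rw [len_eq_card_inversions, len_eq_card_inversions]
  exact card_inversions_mul_s_le w i

lemma len_one : len n 1 = 0 := by rw [len_eq_card_inversions, card_inversions_one]

lemma len_s (i : Fin (n - 1)) : len n (s n i) = 1 := by
  simpa only [one_mul, len_one] using len_mul_s_of_lt (w := 1) (leftPos_lt_rightPos i)

lemma len_inv (w : Equiv.Perm (Fin n)) : len n w⁻¹ = len n w := by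
  rw [len_eq_card_inversions, len_eq_card_inversions, card_inversions_inv]

lemma len_mul_le (v w : Equiv.Perm (Fin n)) : len n (v * w) ≤ len n v + len n w := by
  induction w using descent_induction with
  | one => rw [mul_one, len_one, add_zero]
  | mul_s w i hi ih =>
    rw [← mul_assoc, len_mul_s_of_lt hi, ← add_assoc]
    exact (len_mul_s_le _ i).trans (Nat.succ_le_succ ih)

end Permutations

section BlockPermutations

variable {n k : ℕ} {w : Equiv.Perm (Fin n)}

/-- Every inversion of `w` takes one value below `k` and one value at least `k`. These `w` are the
shortest coset representatives of `(S_k × S_{n-k}) \ S_n`, see `isShort_iff_inversionsCross`. -/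
def InversionsCross (k : ℕ) (w : Equiv.Perm (Fin n)) : Prop :=
  ∀ ⦃x y : Fin n⦄, x < y → w y < w x → (w y : ℕ) < k ∧ k ≤ (w x : ℕ)

lemma inversionsCross_one : InversionsCross k (1 : Equiv.Perm (Fin n)) :=
  fun _ _ hxy hyx => (hxy.asymm hyx).elim

lemma mem_Pset_union_Qset {i : Fin (n - 1)} : i ∈ Pset n k ∪ Qset n k ↔ (i : ℕ) + 1 ≠ k := by
  simp only [Pset, Qset, Finset.mem_union, Finset.mem_filter, Finset.mem_univ, true_and]
  omega

lemma lt_iff_of_mem_parab {x : Equiv.Perm (Fin n)} (hx : x ∈ parab n (Pset n k ∪ Qset n k))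
    (u : Fin n) : (x u : ℕ) < k ↔ (u : ℕ) < k := by
  induction hx using Subgroup.closure_induction generalizing u with
  | mem x hx =>
    obtain ⟨i, hi, rfl⟩ := hx
    rw [mem_Pset_union_Qset] at hi
    rw [s_eq_swap, Equiv.swap_apply_def]
    split_ifs with h₁ h₂
    · simp only [h₁, leftPos, rightPos]; omega
    · simp only [h₂, leftPos, rightPos]; omega
    · rfl
  | one => rfl
  | mul x y _ _ hx hy => rw [Equiv.Perm.mul_apply, hx, hy]
  | inv x _ hx => simpa using (hx (x⁻¹ u)).symm

lemma InversionsCross.isShort (hw : InversionsCross k w) :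
    IsShort n (Pset n k ∪ Qset n k) w := by
  intro x hx
  rw [len_eq_card_inversions, len_eq_card_inversions]
  refine Finset.card_le_card ?_
  rintro ⟨a, b⟩ hab
  rw [mem_inversions] at hab ⊢
  obtain ⟨hb, ha⟩ := hw hab.1 hab.2
  have hxb := (lt_iff_of_mem_parab hx (w b)).mpr hb
  have hxa := (lt_iff_of_mem_parab hx (w a)).not.mpr ha.not_gt
  exact ⟨hab.1, Fin.lt_def.mpr (hxb.trans_le (not_lt.mp hxa))⟩

lemma inv_leftPos_lt_inv_rightPos_of_isShort (hw : IsShort n (Pset n k ∪ Qset n k) w)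
    {j : Fin (n - 1)} (hj : (j : ℕ) + 1 ≠ k) : w⁻¹ (leftPos j) < w⁻¹ (rightPos j) := by
  have hle := hw (s n j) (Subgroup.subset_closure ⟨j, mem_Pset_union_Qset.mpr hj, rfl⟩)
  rw [← len_inv w, ← len_inv (s n j * w), mul_inv_rev, s_inv] at hle
  by_contra hcon
  have hdesc := (not_lt.mp hcon).lt_of_ne (w⁻¹.injective.ne (leftPos_lt_rightPos j).ne')
  rw [len_eq_card_inversions, len_eq_card_inversions, card_inversions_of_gt hdesc] at hle
  omega

lemma isShort_iff_inversionsCross :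
    IsShort n (Pset n k ∪ Qset n k) w ↔ InversionsCross k w := by
  refine ⟨fun hw x y hxy hyx => ?_, InversionsCross.isShort⟩
  by_contra hcon
  suffices hinv : w⁻¹ (w y) < w⁻¹ (w x) from hxy.asymm (by simpa using hinv)
  refine lt_of_forall_leftPos_lt_rightPos hyx fun j hl hr => ?_
  refine inv_leftPos_lt_inv_rightPos_of_isShort hw fun hj => hcon ?_
  rw [Fin.le_def] at hl hr
  simp only [leftPos, rightPos] at hl hr
  omega

lemma InversionsCross.mul_s (hw : InversionsCross k w) {i : Fin (n - 1)}
    (h : ¬((w (leftPos i) : ℕ) < k ↔ (w (rightPos i) : ℕ) < k)) :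
    InversionsCross k (w * s n i) := by
  intro x y hxy hlt
  rw [Equiv.Perm.mul_apply, Equiv.Perm.mul_apply] at hlt ⊢
  by_cases h₁ : x = leftPos i ∧ y = rightPos i
  · obtain ⟨rfl, rfl⟩ := h₁
    rw [s_leftPos, s_rightPos, Fin.lt_def] at *
    omega
  · have h₂ : ¬(x = rightPos i ∧ y = leftPos i) := by
      rintro ⟨rfl, rfl⟩
      exact hxy.asymm (leftPos_lt_rightPos i)
    exact hw ((s_lt_s_iff i h₁ h₂).mpr hxy) hlt

lemma InversionsCross.lt_of_same_block (hw : InversionsCross k w) {i : Fin (n - 1)}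
    (h : (w (leftPos i) : ℕ) < k ↔ (w (rightPos i) : ℕ) < k) :
    w (leftPos i) < w (rightPos i) := by
  refine (w.injective.ne (leftPos_lt_rightPos i).ne).lt_or_gt.resolve_right fun hgt => ?_
  have := hw (leftPos_lt_rightPos i) hgt
  omega

-- Whatever the position of the value in between, it would form an inversion inside the block.
lemma InversionsCross.rightPos_eq_of_same_block (hw : InversionsCross k w) {i : Fin (n - 1)}
    (h : (w (leftPos i) : ℕ) < k ↔ (w (rightPos i) : ℕ) < k) :
    (w (rightPos i) : ℕ) = w (leftPos i) + 1 := by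
  have hlt := Fin.lt_def.mp (hw.lt_of_same_block h)
  by_contra hne
  obtain ⟨x, hx⟩ := w.surjective ⟨w (leftPos i) + 1, by omega⟩
  have hx' : (w x : ℕ) = w (leftPos i) + 1 := congrArg Fin.val hx
  rcases lt_trichotomy x (leftPos i) with hxi | rfl | hxi
  · have := hw hxi (Fin.lt_def.mpr (by omega))
    omega
  · omega
  · rcases lt_trichotomy x (rightPos i) with hxi' | rfl | hxi'
    · rw [Fin.lt_def] at hxi hxi'
      rw [val_rightPos] at hxi'
      omega
    · omega
    · have := hw hxi' (Fin.lt_def.mpr (by omega))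
      omega

lemma InversionsCross.exists_s_mul_eq (hw : InversionsCross k w) {i : Fin (n - 1)}
    (h : (w (leftPos i) : ℕ) < k ↔ (w (rightPos i) : ℕ) < k) :
    ∃ j : Fin (n - 1), (j : ℕ) = w (leftPos i) ∧ (j : ℕ) + 1 ≠ k ∧ w * s n i = s n j * w := by
  have hright := hw.rightPos_eq_of_same_block h
  refine ⟨⟨w (leftPos i), by omega⟩, rfl, by simp only; omega, ?_⟩
  rw [s_eq_swap, s_eq_swap, Equiv.mul_swap_eq_swap_mul]
  exact congrArg₂ (Equiv.swap · · * w) rfl (Fin.ext hright)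

lemma InversionsCross.induction {P : Equiv.Perm (Fin n) → Prop} (one : P 1)
    (mul_s : ∀ w i, (w (leftPos i) : ℕ) < k → k ≤ (w (rightPos i) : ℕ) → P w → P (w * s n i))
    (hw : InversionsCross k w) : P w := by
  induction w using descent_induction with
  | one => exact one
  | mul_s w i hlt ih =>
    have hcross := hw (leftPos_lt_rightPos i) (by simpa using hlt)
    simp only [Equiv.Perm.mul_apply, s_leftPos, s_rightPos] at hcross
    have hw' : InversionsCross k w := by
      rw [← mul_s_mul_s w i]
      refine hw.mul_s ?_
      simp only [Equiv.Perm.mul_apply, s_leftPos, s_rightPos]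
      omega
    exact mul_s w i hcross.1 hcross.2 (ih hw')

end BlockPermutations

section MixedInducedModule

open scoped RightActions

variable {n k : ℕ} {A : Type*} [Ring A] {H : Equiv.Perm (Fin n) → A}
  {M : Type*} [AddCommGroup M] [Module K M] [Module Aᵐᵒᵖ M] {N : Equiv.Perm (Fin n) → M}

/-- `N` satisfies the defining relations of the standard generators of the mixed induced module:
`N 1` generates the character of the Hecke algebra of `W_p × W_q` on which the generators of `W_p`
act by `-q` and those of `W_q` by `q⁻¹`, and the `N w` with `w` shortest span `M`. -/
structure IsMixedInduced (k : ℕ) (H : Equiv.Perm (Fin n) → A) (N : Equiv.Perm (Fin n) → M) :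
    Prop where
  eq_smul : ∀ w, N w = N 1 <• H w
  smul_of_mem_Pset : ∀ i ∈ Pset n k, N 1 <• H (s n i) = (-q) • N 1
  smul_of_mem_Qset : ∀ i ∈ Qset n k, N 1 <• H (s n i) = q⁻¹ • N 1
  span_eq_top : Submodule.span K (N '' {w | IsShort n (Pset n k ∪ Qset n k) w}) = ⊤

lemma IsMixedInduced.one_smul_of_ne (hN : IsMixedInduced k H N) {j : Fin (n - 1)}
    (hj : (j : ℕ) + 1 ≠ k) :
    N 1 <• H (s n j) = (if (j : ℕ) < k then q⁻¹ else -q) • N 1 := by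
  split_ifs with h
  · exact hN.smul_of_mem_Qset j (by simp only [Qset, Finset.mem_filter_univ]; omega)
  · exact hN.smul_of_mem_Pset j (by simp only [Pset, Finset.mem_filter_univ]; omega)

variable [Algebra K A]

/-- `H` satisfies the defining relations of the standard basis of the Hecke algebra of `S_n`. Linear
independence is not part of the notion, so `A` may be any algebra under the Hecke algebra. -/
structure IsHeckeFamily (H : Equiv.Perm (Fin n) → A) : Prop where
  one : H 1 = 1
  mul_s : ∀ (w : Equiv.Perm (Fin n)) (i : Fin (n - 1)),
    len n (w * s n i) = len n w + 1 → H (w * s n i) = H w * H (s n i)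
  quadratic : ∀ i : Fin (n - 1), H (s n i) * H (s n i) = (q⁻¹ - q) • H (s n i) + 1

lemma IsHeckeFamily.apply_mul (hH : IsHeckeFamily H) {v w : Equiv.Perm (Fin n)}
    (h : len n (v * w) = len n v + len n w) : H (v * w) = H v * H w := by
  induction w using descent_induction with
  | one => rw [mul_one, hH.one, mul_one]
  | mul_s w i hi ih =>
    rw [← mul_assoc, len_mul_s_of_lt hi] at h
    have hle := len_mul_le v w
    have hle' := len_mul_s_le (v * w) i
    rw [← mul_assoc, hH.mul_s _ i (by omega), ih (by omega), hH.mul_s w i (len_mul_s_of_lt hi),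
      mul_assoc]

namespace IsMixedInduced

lemma apply_mul (hH : IsHeckeFamily H) (hN : IsMixedInduced k H N) {v w : Equiv.Perm (Fin n)}
    (h : len n (v * w) = len n v + len n w) : N (v * w) = N v <• H w := by
  rw [hN.eq_smul (v * w), hH.apply_mul h, MulOpposite.op_mul, mul_smul, ← hN.eq_smul]

lemma apply_mul_s (hH : IsHeckeFamily H) (hN : IsMixedInduced k H N) {w : Equiv.Perm (Fin n)}
    {i : Fin (n - 1)} (h : w (leftPos i) < w (rightPos i)) :
    N (w * s n i) = N w <• H (s n i) :=
  apply_mul hH hN (by rw [len_mul_s_of_lt h, len_s])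

variable {Ψ : M →ₗ[K] V n}

lemma map_smul_s_of_cross (hH : IsHeckeFamily H) (hN : IsMixedInduced k H N)
    (hΨ : ∀ w, InversionsCross k w → Ψ (N w) = eb (etaMin n k ∘ w)) {w : Equiv.Perm (Fin n)}
    (hw : InversionsCross k w) {i : Fin (n - 1)} (hl : (w (leftPos i) : ℕ) < k)
    (hr : k ≤ (w (rightPos i) : ℕ)) :
    Ψ (N w <• H (s n i)) = heckeOp (leftPos i) (rightPos i) (Ψ (N w)) := by
  rw [← apply_mul_s hH hN (Fin.lt_def.mpr (hl.trans_le hr)), hΨ w hw, hΨ _ (hw.mul_s (by omega)),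
    heckeOp_eb_of_zero_one (η := etaMin n k ∘ w) (if_pos hl) (if_neg hr.not_gt)]
  rfl

variable [IsScalarTower K Aᵐᵒᵖ M]

lemma smul_of_same_block (hH : IsHeckeFamily H) (hN : IsMixedInduced k H N)
    {w : Equiv.Perm (Fin n)} (hw : InversionsCross k w) {i : Fin (n - 1)}
    (h : (w (leftPos i) : ℕ) < k ↔ (w (rightPos i) : ℕ) < k) :
    N w <• H (s n i) = (if (w (leftPos i) : ℕ) < k then q⁻¹ else -q) • N w := by
  have hlt := hw.lt_of_same_block h
  obtain ⟨j, hjw, hjk, hcomm⟩ := hw.exists_s_mul_eq h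
  have hlen : len n (s n j * w) = len n (s n j) + len n w := by
    rw [← hcomm, len_mul_s_of_lt hlt, len_s, add_comm]
  rw [← apply_mul_s hH hN hlt, hcomm, apply_mul hH hN hlen, hN.eq_smul (s n j),
    hN.one_smul_of_ne hjk, smul_comm, ← hN.eq_smul w, hjw]

lemma map_smul_s_basis (hH : IsHeckeFamily H) (hN : IsMixedInduced k H N)
    (hΨ : ∀ w, InversionsCross k w → Ψ (N w) = eb (etaMin n k ∘ w)) {w : Equiv.Perm (Fin n)}
    (hw : InversionsCross k w) (i : Fin (n - 1)) :
    Ψ (N w <• H (s n i)) = heckeOp (leftPos i) (rightPos i) (Ψ (N w)) := by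
  by_cases hblock : (w (leftPos i) : ℕ) < k ↔ (w (rightPos i) : ℕ) < k
  · have hη : (etaMin n k ∘ w) (leftPos i) = (etaMin n k ∘ w) (rightPos i) := by
      simp only [Function.comp_apply, etaMin, hblock]
    rw [smul_of_same_block hH hN hw hblock, map_smul, hΨ w hw, heckeOp_eb_of_eq hη]
    simp [etaMin]
  by_cases hl : (w (leftPos i) : ℕ) < k
  · exact map_smul_s_of_cross hH hN hΨ hw hl (by omega)
  -- Now `w = u * s n i` with `u` in the previous case, so the quadratic relations apply.
  obtain ⟨u, rfl⟩ : ∃ u, w = u * s n i := ⟨w * s n i, (mul_s_mul_s w i).symm⟩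
  have hu : InversionsCross k u := by simpa only [mul_s_mul_s] using hw.mul_s hblock
  simp only [Equiv.Perm.mul_apply, s_leftPos, s_rightPos] at hblock hl
  have hcross := map_smul_s_of_cross hH hN hΨ hu (i := i) (by omega) (by omega)
  rw [apply_mul_s hH hN (Fin.lt_def.mpr (by omega)), smul_smul, ← MulOpposite.op_mul, hH.quadratic,
    MulOpposite.op_add, MulOpposite.op_smul, MulOpposite.op_one, add_smul, one_smul, smul_assoc,
    map_add, map_smul, hcross, heckeOp_heckeOp]

theorem map_smul_s (hH : IsHeckeFamily H) (hN : IsMixedInduced k H N)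
    (hΨ : ∀ w, InversionsCross k w → Ψ (N w) = eb (etaMin n k ∘ w)) (i : Fin (n - 1)) (m : M) :
    Ψ (m <• H (s n i)) = heckeOp (leftPos i) (rightPos i) (Ψ m) := by
  suffices h : Ψ ∘ₗ Algebra.lsmul K K M (MulOpposite.op (H (s n i)))
      = heckeOp (leftPos i) (rightPos i) ∘ₗ Ψ from LinearMap.congr_fun h m
  refine LinearMap.ext_on hN.span_eq_top ?_
  rintro _ ⟨w, hw, rfl⟩
  exact map_smul_s_basis hH hN hΨ (isShort_iff_inversionsCross.mp hw) i

variable {barK : K →+* K} {barM : M →ₛₗ[barK] M}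

theorem barLin_map (hH : IsHeckeFamily H) (hN : IsMixedInduced k H N)
    (hΨ : ∀ w, InversionsCross k w → Ψ (N w) = eb (etaMin n k ∘ w)) (hbarK : barK q = q⁻¹)
    (hbarM : ∀ i m, barM (m <• H (s n i)) <• H (s n i) = barM m) (hone : barM (N 1) = N 1)
    (m : M) : barLin barK one' n (Ψ m) = Ψ (barM m) := by
  suffices h : (barLin barK one' n).comp Ψ = Ψ.comp barM from LinearMap.congr_fun h m
  refine LinearMap.ext_on hN.span_eq_top ?_
  rintro _ ⟨w, hw, rfl⟩
  refine (isShort_iff_inversionsCross.mp hw).induction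
    (P := fun w => barLin barK one' n (Ψ (N w)) = Ψ (barM (N w))) ?one ?mul_s
  case one =>
    rw [hone, hΨ 1 inversionsCross_one]
    exact barLin_eb_etaMin barK one' n k
  case mul_s =>
    intro w i hl hr ih
    rw [← hbarM i (N w), map_smul_s hH hN hΨ] at ih
    rw [apply_mul_s hH hN (Fin.lt_def.mpr (hl.trans_le hr)), map_smul_s hH hN hΨ,
      barLin_heckeOp hbarK (val_rightPos i), ih, heckeOp_heckeOp, add_sub_cancel_left]

end IsMixedInduced

end MixedInducedModule

section CanonicalBasis

variable {n : ℕ}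

lemma smul_eb_mem_qLattice {c : K} (hc : c ∈ qInt) (η : Fin n → Fin 2) :
    c • eb η ∈ qLattice n := by
  intro γ _
  by_cases h : γ = η <;> simp [eb, h, hc]

lemma IsCanon.sub_mem_qLattice {barK : K →+* K} {a : ℕ → ℕ} {η : Fin n → Fin 2} {v : V n}
    (hv : IsCanon barK a n η v) : v - eb η ∈ qLattice n := by
  obtain ⟨-, R, -, hR⟩ := hv
  rw [hR, add_sub_cancel_left]
  exact sum_mem fun γ _ => smul_eb_mem_qLattice (mul_aeval_mem_qInt _) γ

lemma IsCanonBasis.map_sub_mem_qLattice {M : Type} [AddCommGroup M] [Module K M]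
    {short : Equiv.Perm (Fin n) → Prop} {N C : Equiv.Perm (Fin n) → M} {barM : M → M}
    (hC : IsCanonBasis n short N barM C) {Ψ : M →ₗ[K] V n}
    {η : Equiv.Perm (Fin n) → Fin n → Fin 2} (hΨ : ∀ w, short w → Ψ (N w) = eb (η w))
    {w : Equiv.Perm (Fin n)} (hw : short w) : Ψ (C w) - eb (η w) ∈ qLattice n := by
  obtain ⟨-, R, hsupp, hR⟩ := hC w hw
  rw [hR, map_add, hΨ w hw, add_sub_cancel_left, map_sum]
  refine sum_mem fun u _ => ?_
  rw [map_smul]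
  by_cases hu : short u
  · rw [hΨ u hu]
    exact smul_eb_mem_qLattice (mul_aeval_mem_qInt _) _
  · simp [hsupp u fun h => hu h.1, (qLattice n).zero_mem]

lemma zeros_etaMin_comp {k : ℕ} (hk : k ≤ n) (w : Equiv.Perm (Fin n)) :
    zeros (fun i => etaMin n k (w i)) = k := by
  rw [zeros, Finset.card_filter, Equiv.sum_comp w fun i => if etaMin n k i = 0 then 1 else 0,
    ← Finset.card_filter]
  simp [etaMin, Fin.card_filter_val_lt, hk]

end CanonicalBasis

section RightModule

variable {A M : Type*} [Ring A] [AddCommGroup M]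

/-- The right `A`-module structure on `M` with action map `act`, encoded as a left module over
`Aᵐᵒᵖ`. -/
abbrev rightModule (act : M → A → M) (add_act : ∀ m m' a, act (m + m') a = act m a + act m' a)
    (act_add : ∀ m a b, act m (a + b) = act m a + act m b) (act_one : ∀ m, act m 1 = m)
    (act_mul : ∀ m a b, act m (a * b) = act (act m a) b) : Module Aᵐᵒᵖ M :=
  let _ : SMul Aᵐᵒᵖ M := ⟨fun a m => act m a.unop⟩
  Module.ofMinimalAxioms (fun a m m' => add_act m m' a.unop)
    (fun a b m => act_add m a.unop b.unop) (fun a b m => act_mul m b.unop a.unop) act_one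

end RightModule

end SuperHecke

open SuperHecke RightActions in
/-- `hbarM` encodes the compatibility of `barM` with the bar involution of the Hecke algebra, which
maps `H_i` to `H_i⁻¹`. -/
theorem statement10_general {n k : ℕ} {A : Type*} [Ring A] [Algebra K A]
    {H : Equiv.Perm (Fin n) → A} (hH : IsHeckeFamily H)
    {M : Type} [AddCommGroup M] [Module K M] [Module Aᵐᵒᵖ M] [IsScalarTower K Aᵐᵒᵖ M]
    {N : Equiv.Perm (Fin n) → M} (hN : IsMixedInduced k H N)
    {barK : K →+* K} (hbarK : barK q = q⁻¹) (barM : M →ₛₗ[barK] M)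
    (hbarM : ∀ i m, barM (m <• H (s n i)) <• H (s n i) = barM m) (hone : barM (N 1) = N 1)
    {C : Equiv.Perm (Fin n) → M}
    (hC : IsCanonBasis n (IsShort n (Pset n k ∪ Qset n k)) N barM C)
    {Ψ : M →ₗ[K] V n} (hΨ : ∀ w, IsShort n (Pset n k ∪ Qset n k) w →
      Ψ (N w) = eb (fun i => etaMin n k (w i)))
    {w : Equiv.Perm (Fin n)} (hw : IsShort n (Pset n k ∪ Qset n k) w)
    {v : V n} (hv : IsCanon barK one' n (fun i => etaMin n k (w i)) v) :
    Ψ (C w) = v := by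
  have hbarΨ : barLin barK one' n (Ψ (C w)) = Ψ (C w) := by
    rw [hN.barLin_map hH (fun u hu => hΨ u hu.isShort) hbarK hbarM hone, (hC w hw).1]
  have hbarv : barLin barK one' n v = v := hv.1
  have hmem : Ψ (C w) - v ∈ qLattice n := by
    simpa using sub_mem (hC.map_sub_mem_qLattice hΨ hw) hv.sub_mem_qLattice
  refine sub_eq_zero.mp (eq_zero_of_mem_qLattice_of_barLin_eq one' hbarK hmem ?_)
  rw [map_sub, hbarΨ, hbarv]

theorem statement10 (n k : ℕ) (hk : k ≤ n)
    (A : Type) [Ring A] [Algebra K A]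
    (H : Equiv.Perm (Fin n) → A)
    (hHLI : LinearIndependent K H)
    (hHspan : Submodule.span K (Set.range H) = ⊤)
    (hone : H 1 = 1)
    (hmul : ∀ (w : Equiv.Perm (Fin n)) (i : Fin (n - 1)),
      len n (w * s n i) = len n w + 1 → H (w * s n i) = H w * H (s n i))
    (hquad : ∀ i : Fin (n - 1),
      H (s n i) * H (s n i) = (q⁻¹ - q) • H (s n i) + 1)
    (barK : K →+* K) (hbarKq : barK q = q⁻¹)
    (hbarKc : ∀ z : ℂ, barK (algebraMap ℂ K z) = algebraMap ℂ K z)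
    (bar : A →+* A)
    (hbar_smul : ∀ (c : K) (x : A), bar (c • x) = barK c • bar x)
    (hbarH : ∀ w : Equiv.Perm (Fin n),
      bar (H w) * H w⁻¹ = 1 ∧ H w⁻¹ * bar (H w) = 1)
    (M : Type) [AddCommGroup M] [Module K M]
    (act : M → A → M)
    (hact_addl : ∀ (m m' : M) (a : A), act (m + m') a = act m a + act m' a)
    (hact_addr : ∀ (m : M) (a b : A), act m (a + b) = act m a + act m b)
    (hact_smull : ∀ (c : K) (m : M) (a : A), act (c • m) a = c • act m a)
    (hact_smulr : ∀ (c : K) (m : M) (a : A), act m (c • a) = c • act m a)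
    (hact_one : ∀ m : M, act m 1 = m)
    (hact_mul : ∀ (m : M) (a b : A), act m (a * b) = act (act m a) b)
    (N : Equiv.Perm (Fin n) → M)
    (hN : ∀ w, N w = act (N 1) (H w))
    (hgenP : ∀ i ∈ Pset n k, act (N 1) (H (s n i)) = (-q) • N 1)
    (hgenQ : ∀ i ∈ Qset n k, act (N 1) (H (s n i)) = q⁻¹ • N 1)
    (hNLI : LinearIndependent K
      (fun w : {w : Equiv.Perm (Fin n) // IsShort n (Pset n k ∪ Qset n k) w} => N w))
    (hNspan : Submodule.span K (N '' {w | IsShort n (Pset n k ∪ Qset n k) w}) = ⊤)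
    (barM : M → M)
    (hbarM_add : ∀ m m' : M, barM (m + m') = barM m + barM m')
    (hbarM_smul : ∀ (c : K) (m : M), barM (c • m) = barK c • barM m)
    (hbarM_act : ∀ (m : M) (a : A), barM (act m a) = act (barM m) (bar a))
    (hbarM_one : barM (N 1) = N 1) :
    ∀ C : Equiv.Perm (Fin n) → M,
      IsCanonBasis n (IsShort n (Pset n k ∪ Qset n k)) N barM C →
      ∀ D : (Fin n → Fin 2) → V n,
        (∀ η : Fin n → Fin 2, zeros η = k → IsCanon barK one' n η (D η)) →
        ∀ Ψ : M →ₗ[K] V n,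
          (∀ w : Equiv.Perm (Fin n), IsShort n (Pset n k ∪ Qset n k) w →
            Ψ (N w) = eb (fun i => etaMin n k (w i))) →
          ∀ w : Equiv.Perm (Fin n), IsShort n (Pset n k ∪ Qset n k) w →
            Ψ (C w) = D (fun i => etaMin n k (w i)) := by
  intro C hC D hD Ψ hΨ w hw
  let _ : Module Aᵐᵒᵖ M := SuperHecke.rightModule act hact_addl hact_addr hact_one hact_mul
  have : IsScalarTower K Aᵐᵒᵖ M := ⟨fun c a m => hact_smulr c m a.unop⟩
  have hbarM (i : Fin (n - 1)) (m : M) :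
      act (barM (act m (H (s n i)))) (H (s n i)) = barM m := by
    have hinv := (hbarH (s n i)).1
    rw [SuperHecke.s_inv] at hinv
    rw [hbarM_act, ← hact_mul, hinv, hact_one]
  exact statement10_general ⟨hone, hmul, hquad⟩ ⟨hN, hgenP, hgenQ, hNspan⟩ hbarKq
    ⟨⟨barM, hbarM_add⟩, hbarM_smul⟩ hbarM hbarM_one hC hΨ hw
    (hD _ (SuperHecke.zeros_etaMin_comp hk w))
end
end

section
/- Let a = (a_1,...,a_l) be a sequence of strictly positive integers. In V(a), for each standard basis element v^a_η there is a unique bar-invariant element v^{◊a}_η such that v^{◊a}_η - v^a_η is a qℤ[q]-linear combination of standard basis elements strictly smaller than v^a_η. -/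
open scoped Classical

set_option maxHeartbeats 1000000
set_option synthInstance.maxHeartbeats 200000

noncomputable section

/-!
The bar involution is computed by recursion on the last tensor factor, and it commutes with `E`
because `q⁻ᵃ - (q⁻¹ - q)[a] = qᵃ`; together with `E² = 0` this makes it an involution. Its matrix
has entries in `ℤ[q, q⁻¹]` and is unitriangular for the dominance order on `{0,1}`-sequences: each
correction term `E ⊗ F` moves a `1` to the right.

A bar-invariant element of `qℤ[q]` vanishes, and every bar-anti-invariant element of `ℤ[q, q⁻¹]` is
`d - bar d` for some `d ∈ qℤ[q]`. For a unitriangular involution these two facts give uniqueness and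
existence of the canonical basis by successively correcting maximal coefficients (Lusztig's lemma).

It remains to compare dominance with the Bruhat order. Sorting `η` into `η_min` by adjacent swaps of
descents `1, 0` produces a reduced word of a shortest coset representative, and if `γ` is dominated
by `η`, then keeping only those swaps which also remove a descent of `γ` gives a subword
representing `γ`.
-/

section LaurentPolynomials

open Polynomial LaurentPolynomial

theorem coeff_T_mul {R : Type*} [Semiring R] (m n : ℤ) (p : R[T;T⁻¹]) :
    (T m * p).coeff n = p.coeff (n - m) := by
  rw [T, AddMonoidAlgebra.coeff_single_mul_apply, one_mul, neg_add_eq_sub]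

theorem coeff_toLaurent_natCast {R : Type*} [Semiring R] (S : R[X]) (n : ℕ) :
    (toLaurent S).coeff n = S.coeff n := by
  rw [coeff_toLaurent]
  exact Finsupp.mapDomain_apply Nat.cast_injective _ n

theorem coeff_toLaurent_of_neg {R : Type*} [Semiring R] (S : R[X]) {n : ℤ} (hn : n < 0) :
    (toLaurent S).coeff n = 0 := by
  rw [coeff_toLaurent]
  refine Finsupp.mapDomain_of_notMem_range _ _ ?_
  rintro ⟨k, rfl⟩
  exact hn.not_ge (Int.natCast_nonneg k)

theorem coeff_trunc {R : Type*} [Semiring R] (p : R[T;T⁻¹]) (n : ℕ) :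
    (trunc p).coeff n = p.coeff n := rfl

theorem eq_zero_of_invert_T_mul_toLaurent_eq {R : Type*} [CommSemiring R] {S : R[X]}
    (h : invert (T 1 * toLaurent S) = T 1 * toLaurent S) : S = 0 := by
  ext n
  have hn := congrArg (fun p : R[T;T⁻¹] => p.coeff (n + 1)) h
  simp only [invert_apply, coeff_T_mul, add_sub_cancel_right, coeff_toLaurent_natCast] at hn
  rw [← hn, coeff_toLaurent_of_neg S (by lia), coeff_zero]

theorem exists_eq_sub_invert_of_invert_eq_neg {R : Type*} [CommRing R] [IsAddTorsionFree R]
    {p : R[T;T⁻¹]} (h : invert p = -p) :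
    ∃ S : R[X], p = T 1 * toLaurent S - invert (T 1 * toLaurent S) := by
  set P := T 1 * toLaurent (trunc (T (-1) * p)) with hP
  have hp (n : ℤ) : p.coeff (-n) = -p.coeff n := by
    rw [← invert_apply, h, AddMonoidAlgebra.coeff_neg, Finsupp.neg_apply]
  have hP_pos {n : ℤ} (hn : 0 < n) : P.coeff n = p.coeff n := by
    obtain ⟨k, rfl⟩ := Int.eq_succ_of_zero_lt hn
    rw [hP, coeff_T_mul, add_sub_cancel_right, coeff_toLaurent_natCast,
      coeff_trunc, coeff_T_mul, sub_neg_eq_add]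
  have hP_nonpos {n : ℤ} (hn : n ≤ 0) : P.coeff n = 0 := by
    rw [hP, coeff_T_mul, coeff_toLaurent_of_neg _ (by lia)]
  refine ⟨trunc (T (-1) * p), LaurentPolynomial.ext fun n => ?_⟩
  rw [← hP, AddMonoidAlgebra.coeff_sub, Finsupp.sub_apply, invert_apply]
  rcases lt_trichotomy n 0 with hn | rfl | hn
  · rw [hP_nonpos hn.le, hP_pos (neg_pos.2 hn), hp, zero_sub, neg_neg]
  · rw [neg_zero, sub_self, ← self_eq_neg, ← hp, neg_zero]
  · rw [hP_pos hn, hP_nonpos (neg_nonpos.2 hn.le), sub_zero]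

end LaurentPolynomials

section LaurentValues

open Polynomial LaurentPolynomial

variable {F : Type*} [CommRing F]

/-- The subring `ℤ[x, x⁻¹]` of values at `x` of integral Laurent polynomials. -/
def laurentSubring (x : Fˣ) : Subring F :=
  (LaurentPolynomial.eval₂ (Int.castRingHom F) x).range

theorem zpow_mem_laurentSubring (x : Fˣ) (n : ℤ) : ((x ^ n : Fˣ) : F) ∈ laurentSubring x :=
  ⟨T n, eval₂_T _ _ n⟩

theorem map_eval₂_laurent {σ : F →+* F} {x : Fˣ} (hσ : σ x = ↑x⁻¹) (p : ℤ[T;T⁻¹]) :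
    σ (LaurentPolynomial.eval₂ (Int.castRingHom F) x p) =
      LaurentPolynomial.eval₂ (Int.castRingHom F) x (invert p) := by
  have hσx (n : ℤ) : σ ((x ^ n : Fˣ) : F) = ((x ^ (-n) : Fˣ) : F) := by
    have hu : Units.map (σ : F →* F) x = x⁻¹ := Units.ext hσ
    rw [zpow_neg, ← inv_zpow, ← hu, ← map_zpow]
    rfl
  induction p using LaurentPolynomial.induction_on' with
  | add p p' hp hp' => simp only [map_add, hp, hp']
  | C_mul_T n c =>
    simp only [map_mul, eq_intCast, map_intCast, invert_T, eval₂_T, hσx]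

-- The `ℤ`-algebra structure is arbitrary because the one of `RatFunc ℂ` as an algebra over
-- polynomials is not reducibly equal to `Ring.toIntAlgebra`.
variable [Algebra ℤ F]

/-- The additive group `xℤ[x]` of values at `x` of integral polynomials without constant term. -/
def positiveLattice (x : F) : AddSubgroup F :=
  ((AddMonoidHom.mulLeft x).comp (aeval (R := ℤ) x).toAddMonoidHom).range

theorem mem_positiveLattice {x c : F} :
    c ∈ positiveLattice x ↔ ∃ S : ℤ[X], x * aeval x S = c := Iff.rfl

theorem eval₂_T_mul_toLaurent (x : Fˣ) (S : ℤ[X]) :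
    LaurentPolynomial.eval₂ (Int.castRingHom F) x (T 1 * toLaurent S) = x * aeval (x : F) S := by
  rw [map_mul, eval₂_T, eval₂_toLaurent, zpow_one, aeval_def, (algebraMap ℤ F).eq_intCast']

theorem positiveLattice_le_laurentSubring (x : Fˣ) :
    positiveLattice (x : F) ≤ (laurentSubring x).toAddSubgroup := by
  rintro _ ⟨S, rfl⟩
  exact ⟨_, eval₂_T_mul_toLaurent x S⟩

theorem eval₂_laurent_injective {x : Fˣ} (hx : Transcendental ℤ (x : F)) :
    Function.Injective (LaurentPolynomial.eval₂ (Int.castRingHom F) x) := by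
  refine (injective_iff_map_eq_zero _).2 fun p hp => ?_
  obtain ⟨n, S, hS⟩ := exists_T_pow p
  have hS0 : S = 0 := transcendental_iff.1 hx S <| by
    rw [aeval_def, (algebraMap ℤ F).eq_intCast', ← eval₂_toLaurent, hS, map_mul, hp, zero_mul]
  exact (isUnit_T n).mul_left_eq_zero.1 (by rw [← hS, hS0, map_zero])

theorem eq_zero_of_mem_positiveLattice {σ : F →+* F} {x : Fˣ} (hx : Transcendental ℤ (x : F))
    (hσ : σ x = ↑x⁻¹) {c : F} (hc : c ∈ positiveLattice (x : F)) (hcσ : σ c = c) : c = 0 := by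
  obtain ⟨S, rfl⟩ := mem_positiveLattice.1 hc
  rw [← eval₂_T_mul_toLaurent, map_eval₂_laurent hσ] at hcσ
  rw [eq_zero_of_invert_T_mul_toLaurent_eq (eval₂_laurent_injective hx hcσ), map_zero, mul_zero]

theorem exists_mem_positiveLattice_eq_sub {σ : F →+* F} {x : Fˣ}
    (hx : Transcendental ℤ (x : F)) (hσ : σ x = ↑x⁻¹) {c : F} (hc : c ∈ laurentSubring x)
    (hcσ : σ c = -c) : ∃ d ∈ positiveLattice (x : F), c = d - σ d := by
  obtain ⟨p, rfl⟩ := hc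
  rw [map_eval₂_laurent hσ, ← map_neg] at hcσ
  obtain ⟨S, hS⟩ := exists_eq_sub_invert_of_invert_eq_neg (eval₂_laurent_injective hx hcσ)
  refine ⟨x * aeval (x : F) S, ⟨S, rfl⟩, ?_⟩
  rw [← eval₂_T_mul_toLaurent, map_eval₂_laurent hσ, ← map_sub, ← hS]

end LaurentValues

section Lusztig

theorem exists_maximal_of_trans_irrefl {ι : Type*} [Finite ι] (r : ι → ι → Prop) [IsTrans ι r]
    [Std.Irrefl r] {p : ι → Prop} (hp : ∃ i, p i) : ∃ m, p m ∧ ∀ i, r m i → ¬ p i := by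
  obtain ⟨m, hm, hmax⟩ :=
    (Finite.wellFounded_of_trans_of_irrefl (Function.swap r)).has_min {i | p i} hp
  exact ⟨m, hm, fun i hmi hi => hmax i hi hmi⟩

variable {ι R : Type*} [DecidableEq ι] [CommRing R] {σ : R →+* R}

/-- The matrix of a semilinear endomorphism is unitriangular for the relation `r`: the image of a
standard basis vector `e_j` is `e_j` plus a combination of vectors `e_i` with `r i j`. -/
structure IsUnitriangular (r : ι → ι → Prop) (ψ : (ι → R) →ₛₗ[σ] (ι → R)) : Prop where
  apply_single_self (j : ι) : ψ (Pi.single j 1) j = 1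
  rel_of_ne {i j : ι} : i ≠ j → ψ (Pi.single j 1) i ≠ 0 → r i j

theorem semilinear_apply_single (ψ : (ι → R) →ₛₗ[σ] (ι → R)) (j : ι) (c : R) (i : ι) :
    ψ (Pi.single j c) i = σ c * ψ (Pi.single j 1) i := by
  rw [← mul_one c, ← smul_eq_mul, Pi.single_smul, map_smulₛₗ, Pi.smul_apply, smul_eq_mul,
    smul_eq_mul, mul_one]

theorem semilinear_apply_eq_sum [Fintype ι] (ψ : (ι → R) →ₛₗ[σ] (ι → R)) (x : ι → R) (i : ι) :
    ψ x i = ∑ j, σ (x j) * ψ (Pi.single j 1) i := by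
  conv_lhs => rw [← Finset.univ_sum_single x, map_sum, Finset.sum_apply]
  simp only [semilinear_apply_single ψ _ (x _)]

namespace IsUnitriangular

variable [Finite ι] {r : ι → ι → Prop} {ψ : (ι → R) →ₛₗ[σ] (ι → R)}

theorem apply_eq_of_maximal (hψ : IsUnitriangular r ψ) {x : ι → R} {m : ι}
    (hm : ∀ i, r m i → x i = 0) : ψ x m = σ (x m) := by
  cases nonempty_fintype ι
  rw [semilinear_apply_eq_sum, Finset.sum_eq_single m, hψ.apply_single_self, mul_one]
  · intro j _ hj
    by_cases h : ψ (Pi.single j 1) m = 0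
    · rw [h, mul_zero]
    · rw [hm j (hψ.rel_of_ne hj.symm h), map_zero, zero_mul]
  · exact fun h => absurd (Finset.mem_univ m) h

theorem eq_zero_of_apply_eq_self [IsTrans ι r] [Std.Irrefl r] (hψ : IsUnitriangular r ψ)
    {L : AddSubgroup R} (hL : ∀ c ∈ L, σ c = c → c = 0) {x : ι → R} (hx : ∀ i, x i ∈ L)
    (hψx : ψ x = x) : x = 0 := by
  by_contra hne
  obtain ⟨m, hm, hmax⟩ := exists_maximal_of_trans_irrefl r (Function.ne_iff.1 hne)
  refine hm (hL _ (hx m) ?_)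
  rw [← hψ.apply_eq_of_maximal fun i hi => not_not.1 (hmax i hi), hψx]

variable {A : Subring R} {L : AddSubgroup R}

theorem exists_sub_single_eq_zero (hψ : IsUnitriangular r ψ) (hLA : L ≤ A.toAddSubgroup)
    (hA : ∀ i j, ψ (Pi.single j 1) i ∈ A) (hL : ∀ c ∈ A, σ c = -c → ∃ d ∈ L, c = d - σ d)
    {x : ι → R} (hxA : ∀ i, x i ∈ A) (hψx : ψ x = -x) {m : ι} (hm : ∀ i, r m i → x i = 0) :
    ∃ d ∈ L, (∀ i, (x - (Pi.single m d - ψ (Pi.single m d)) : ι → R) i ∈ A) ∧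
      ∀ i, (x i = 0 ∧ ¬ r i m) ∨ i = m →
        (x - (Pi.single m d - ψ (Pi.single m d)) : ι → R) i = 0 := by
  have hxm : σ (x m) = -x m := by rw [← hψ.apply_eq_of_maximal hm, hψx, Pi.neg_apply]
  obtain ⟨d, hdL, hxd⟩ := hL _ (hxA m) hxm
  have hσd : σ d ∈ A := by
    rw [← sub_sub_cancel d (σ d), ← hxd]
    exact A.sub_mem (hLA hdL) (hxA m)
  refine ⟨d, hdL, fun i => ?_, fun i hi => ?_⟩
  · rw [Pi.sub_apply, Pi.sub_apply, semilinear_apply_single]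
    refine A.sub_mem (hxA i) (A.sub_mem ?_ (A.mul_mem hσd (hA i m)))
    rcases eq_or_ne i m with rfl | him
    · rw [Pi.single_eq_same]; exact hLA hdL
    · rw [Pi.single_eq_of_ne him]; exact A.zero_mem
  · rw [Pi.sub_apply, Pi.sub_apply, semilinear_apply_single]
    rcases eq_or_ne i m with rfl | him
    · rw [Pi.single_eq_same, hψ.apply_single_self, mul_one, hxd, sub_self]
    · obtain ⟨hxi, hri⟩ := hi.resolve_right him
      rw [hxi, Pi.single_eq_of_ne him, not_not.1 (mt (hψ.rel_of_ne him) hri), mul_zero, sub_self,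
        sub_self]

variable [IsTrans ι r] [Std.Irrefl r]

theorem exists_eq_sub_apply (hψ : IsUnitriangular r ψ) (hψψ : ∀ x, ψ (ψ x) = x)
    (hLA : L ≤ A.toAddSubgroup) (hA : ∀ i j, ψ (Pi.single j 1) i ∈ A)
    (hL : ∀ c ∈ A, σ c = -c → ∃ d ∈ L, c = d - σ d)
    {s : Finset ι} (hs : ∀ i ∈ s, ∀ j, r j i → j ∈ s) {x : ι → R} (hxs : ∀ i, i ∉ s → x i = 0)
    (hxA : ∀ i, x i ∈ A) (hψx : ψ x = -x) :
    ∃ y : ι → R, (∀ i, i ∉ s → y i = 0) ∧ (∀ i, y i ∈ L) ∧ x = y - ψ y := by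
  induction s using Finset.strongInduction generalizing x with
  | H s ih =>
  rcases s.eq_empty_or_nonempty with rfl | hne
  · obtain rfl : x = 0 := funext fun i => hxs i (Finset.notMem_empty i)
    exact ⟨0, fun _ _ => rfl, fun _ => L.zero_mem, by simp only [map_zero, sub_zero]⟩
  obtain ⟨m, hms, hmax⟩ := exists_maximal_of_trans_irrefl r hne
  obtain ⟨d, hdL, hdA, hd0⟩ :=
    hψ.exists_sub_single_eq_zero hLA hA hL hxA hψx fun i hi => hxs i (hmax i hi)
  have hlower : ∀ i ∈ s.erase m, ∀ j, r j i → j ∈ s.erase m := by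
    intro i hi j hji
    have his := Finset.mem_of_mem_erase hi
    exact Finset.mem_erase.2 ⟨fun h => hmax i (h ▸ hji) his, hs i his j hji⟩
  have hsupp (i : ι) (hi : i ∉ s.erase m) : (x i = 0 ∧ ¬ r i m) ∨ i = m := by
    by_cases him : i = m
    · exact Or.inr him
    · have his : i ∉ s := fun h => hi (Finset.mem_erase.2 ⟨him, h⟩)
      exact Or.inl ⟨hxs i his, fun h => his (hs m hms i h)⟩
  obtain ⟨y, hys, hyL, hy⟩ := ih (s.erase m) (Finset.erase_ssubset hms) hlower
    (fun i hi => hd0 i (hsupp i hi)) hdA (by rw [map_sub, map_sub, hψψ, hψx]; abel)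
  refine ⟨y + Pi.single m d, fun i hi => ?_, fun i => L.add_mem (hyL i) ?_, ?_⟩
  · rw [Pi.add_apply, hys i fun h => hi (Finset.mem_of_mem_erase h), zero_add,
      Pi.single_eq_of_ne (ne_of_mem_of_not_mem hms hi).symm]
  · rw [Pi.single_apply]
    split_ifs
    exacts [hdL, L.zero_mem]
  · rw [map_add, add_sub_add_comm, ← hy, sub_add_cancel]

theorem exists_apply_eq_self (hψ : IsUnitriangular r ψ) (hψψ : ∀ x, ψ (ψ x) = x)
    (hLA : L ≤ A.toAddSubgroup) (hA : ∀ i j, ψ (Pi.single j 1) i ∈ A)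
    (hL : ∀ c ∈ A, σ c = -c → ∃ d ∈ L, c = d - σ d) (j : ι) :
    ∃ v : ι → R, ψ v = v ∧ ∀ i, (v - Pi.single j 1 : ι → R) i ∈ L ∧
      (¬ r i j → (v - Pi.single j 1 : ι → R) i = 0) := by
  classical
  cases nonempty_fintype ι
  have hlower : ∀ i ∈ ({i | r i j} : Finset ι), ∀ k, r k i → k ∈ ({i | r i j} : Finset ι) := by
    simp only [Finset.mem_filter_univ]
    exact fun i hi k hki => _root_.trans hki hi
  have hsupp (i : ι) (hi : i ∉ ({i | r i j} : Finset ι)) :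
      (ψ (Pi.single j 1) - Pi.single j 1 : ι → R) i = 0 := by
    rw [Finset.mem_filter_univ] at hi
    rw [Pi.sub_apply]
    rcases eq_or_ne i j with rfl | hij
    · rw [hψ.apply_single_self, Pi.single_eq_same, sub_self]
    · rw [not_not.1 (mt (hψ.rel_of_ne hij) hi), Pi.single_eq_of_ne hij, sub_self]
  have hmem (i : ι) : (ψ (Pi.single j 1) - Pi.single j 1 : ι → R) i ∈ A := by
    refine A.sub_mem (hA i j) ?_
    rw [Pi.single_apply]
    split_ifs
    exacts [A.one_mem, A.zero_mem]
  obtain ⟨y, hys, hyL, hy⟩ := hψ.exists_eq_sub_apply hψψ hLA hA hL hlower hsupp hmem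
    (by rw [map_sub, hψψ, neg_sub])
  refine ⟨Pi.single j 1 + y, ?_, fun i => ?_⟩
  · rw [map_add, ← sub_eq_zero, ← sub_eq_zero.2 hy]
    abel
  · rw [add_sub_cancel_left]
    exact ⟨hyL i, fun hi => hys i (by rwa [Finset.mem_filter_univ])⟩

end IsUnitriangular

end Lusztig

theorem q_ne_zero : q ≠ 0 := RatFunc.X_ne_zero

theorem transcendental_q : Transcendental ℤ q :=
  (RatFunc.transcendental_X (K := ℂ)).restrictScalars (RingHom.injective_int (algebraMap ℤ ℂ))

theorem q_sub_inv_ne_zero : q - q⁻¹ ≠ 0 := by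
  intro h
  refine Polynomial.X_pow_sub_C_ne_zero two_pos (1 : ℤ) (transcendental_iff.1 transcendental_q _ ?_)
  rw [map_sub, map_pow, Polynomial.aeval_X, Polynomial.C_1, map_one, sq]
  rw [← mul_inv_cancel₀ q_ne_zero, ← mul_sub, h, mul_zero]

theorem inv_sub_mul_qnum (k : ℕ) : (q⁻¹ - q) * qnum k = q⁻¹ ^ k - q ^ k := by
  rw [← neg_sub q, neg_mul, qnum, mul_div_cancel₀ _ q_sub_inv_ne_zero, neg_sub]

theorem map_qnum {σ : K →+* K} (hσ : σ q = q⁻¹) (k : ℕ) : σ (qnum k) = qnum k := by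
  rw [qnum, map_div₀, map_sub, map_sub, map_pow, map_pow, map_inv₀, hσ, inv_inv, ← neg_div_neg_eq,
    neg_sub, neg_sub]

theorem qnum_succ (k : ℕ) : qnum (k + 1) = q * qnum k + q⁻¹ ^ k := by
  rw [qnum, qnum, div_eq_iff q_sub_inv_ne_zero, add_mul, mul_assoc,
    div_mul_cancel₀ _ q_sub_inv_ne_zero]
  ring

/-- `q` as a unit of `ℂ(q)`. -/
def qUnit : Kˣ := Units.mk0 q q_ne_zero

theorem q_mem_laurentSubring : q ∈ laurentSubring qUnit := by
  simpa [qUnit] using zpow_mem_laurentSubring qUnit 1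

theorem inv_q_mem_laurentSubring : q⁻¹ ∈ laurentSubring qUnit := by
  simpa [qUnit] using zpow_mem_laurentSubring qUnit (-1)

theorem qnum_mem_laurentSubring (k : ℕ) : qnum k ∈ laurentSubring qUnit := by
  induction k with
  | zero => simp [qnum]
  | succ k ih =>
    rw [qnum_succ]
    exact add_mem (mul_mem q_mem_laurentSubring ih) (pow_mem inv_q_mem_laurentSubring k)

theorem map_map_eq_self {σ : K →+* K} (hσ : σ q = q⁻¹)
    (hσc : ∀ z : ℂ, σ (algebraMap ℂ K z) = algebraMap ℂ K z) (c : K) : σ (σ c) = c := by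
  suffices σ.comp σ = RingHom.id K from DFunLike.congr_fun this c
  refine IsLocalization.ringHom_ext (nonZeroDivisors (Polynomial ℂ))
    (Polynomial.ringHom_ext (fun z => ?_) ?_)
  · change σ (σ (algebraMap ℂ K z)) = algebraMap ℂ K z
    rw [hσc, hσc]
  · rw [RingHom.comp_apply, RingHom.comp_apply, RatFunc.algebraMap_X]
    change σ (σ q) = q
    rw [hσ, map_inv₀, hσ, inv_inv]

section BarInvolution

-- Over `RatFunc ℂ` these lose against the algebra structures of `RatFunc`, and `module` fails.
attribute [local instance] Semiring.toNatAlgebra Ring.toIntAlgebra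

variable {m : ℕ}

/-- The component of a vector of `V(a_1) ⊗ ⋯ ⊗ V(a_{m+1})` along the basis vector `v_x` of the last
tensor factor. -/
def lastComp (x : Fin 2) : V (m + 1) →ₗ[K] V m := LinearMap.funLeft K K fun δ => Fin.snoc δ x

theorem lastComp_apply (x : Fin 2) (f : V (m + 1)) (δ : Fin m → Fin 2) :
    lastComp x f δ = f (Fin.snoc δ x) := rfl

theorem ext_lastComp {f g : V (m + 1)} (h₀ : lastComp 0 f = lastComp 0 g)
    (h₁ : lastComp 1 f = lastComp 1 g) : f = g := by
  funext γ
  rw [← Fin.snoc_init_self γ]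
  generalize γ (Fin.last m) = x
  fin_cases x
  exacts [congrFun h₀ _, congrFun h₁ _]

/-- The parity twist as a linear map. -/
def parity : V m →ₗ[K] V m where
  toFun := twist
  map_add' _ _ := funext fun _ => mul_add _ _ _
  map_smul' _ _ := funext fun _ => mul_left_comm _ _ _

theorem parity_apply (f : V m) (η : Fin m → Fin 2) : parity f η = (-1) ^ ones η * f η := rfl

theorem parity_parity (f : V m) : parity (parity f) = f := by
  funext η
  rw [parity_apply, parity_apply, ← mul_assoc, ← mul_pow, neg_one_mul, neg_neg, one_pow, one_mul]

theorem ones_snoc (δ : Fin m → Fin 2) (x : Fin 2) :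
    ones (Fin.snoc δ x : Fin (m + 1) → Fin 2) = ones δ + if x = 1 then 1 else 0 := by
  simp only [ones, Finset.card_filter, Fin.sum_univ_castSucc, Fin.snoc_castSucc, Fin.snoc_last]

theorem lastComp_zero_parity (f : V (m + 1)) : lastComp 0 (parity f) = parity (lastComp 0 f) := by
  funext δ
  simp [lastComp_apply, parity_apply, ones_snoc]

theorem lastComp_one_parity (f : V (m + 1)) : lastComp 1 (parity f) = -parity (lastComp 1 f) := by
  funext δ
  simp [lastComp_apply, parity_apply, ones_snoc, pow_succ]

theorem onesBefore_snoc_castSucc (δ : Fin m → Fin 2) (x : Fin 2) (i : Fin m) :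
    onesBefore (Fin.snoc δ x : Fin (m + 1) → Fin 2) i.castSucc = onesBefore δ i := by
  rw [onesBefore, onesBefore, Finset.card_filter, Finset.card_filter, Fin.sum_univ_castSucc]
  simp [-Finset.sum_boole, Fin.le_last]

theorem onesBefore_snoc_last (δ : Fin m → Fin 2) (x : Fin 2) :
    onesBefore (Fin.snoc δ x : Fin (m + 1) → Fin 2) (Fin.last m) = ones δ := by
  rw [onesBefore, ones, Finset.card_filter, Finset.card_filter, Fin.sum_univ_castSucc]
  simp [-Finset.sum_boole, Fin.castSucc_lt_last]

theorem sum_castSucc_lt (a : ℕ → ℕ) (i : Fin m) :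
    ∑ j : Fin (m + 1) with i.castSucc < j, a j = ∑ j : Fin m with i < j, a j + a m := by
  simp [Finset.sum_filter, Fin.sum_univ_castSucc, Fin.castSucc_lt_last]

theorem sum_last_lt (a : ℕ → ℕ) : ∑ j : Fin (m + 1) with Fin.last m < j, a j = 0 := by
  simp [Finset.sum_filter, Fin.sum_univ_castSucc, Fin.le_last]

theorem Eop_apply (a : ℕ → ℕ) (f : V m) (γ : Fin m → Fin 2) :
    Eop a m f γ = ∑ i : Fin m, if γ i = 0 then
      (-1) ^ onesBefore γ i * qnum (a i) * q ^ (-((∑ j : Fin m with i < j, a j : ℕ) : ℤ))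
        * f (Function.update γ i 1) else 0 := rfl

theorem Eop_apply_snoc (a : ℕ → ℕ) (f : V (m + 1)) (δ : Fin m → Fin 2) (x : Fin 2) :
    Eop a (m + 1) f (Fin.snoc δ x) = q⁻¹ ^ a m * Eop a m (lastComp x f) δ +
      if x = 0 then qnum (a m) * parity (lastComp 1 f) δ else 0 := by
  rw [Eop_apply, Eop_apply, Fin.sum_univ_castSucc, Finset.mul_sum]
  congr 1
  · refine Finset.sum_congr rfl fun i _ => ?_
    rw [Fin.snoc_castSucc, onesBefore_snoc_castSucc, sum_castSucc_lt, ← Fin.snoc_update,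
      Fin.val_castSucc, lastComp_apply, mul_ite, mul_zero, Nat.cast_add, neg_add,
      zpow_add₀ q_ne_zero, zpow_neg q (a m), zpow_natCast, inv_pow]
    congr 1
    ring
  · rw [Fin.snoc_last, onesBefore_snoc_last, sum_last_lt, Fin.update_snoc_last, Fin.val_last,
      parity_apply, lastComp_apply, Nat.cast_zero, neg_zero, zpow_zero]
    congr 1
    ring

theorem lastComp_zero_Eop (a : ℕ → ℕ) (f : V (m + 1)) :
    lastComp 0 (Eop a (m + 1) f) =
      q⁻¹ ^ a m • Eop a m (lastComp 0 f) + qnum (a m) • parity (lastComp 1 f) :=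
  funext fun δ => Eop_apply_snoc a f δ 0

theorem lastComp_one_Eop (a : ℕ → ℕ) (f : V (m + 1)) :
    lastComp 1 (Eop a (m + 1) f) = q⁻¹ ^ a m • Eop a m (lastComp 1 f) :=
  funext fun δ => (Eop_apply_snoc a f δ 1).trans (add_zero _)

theorem parity_Eop (a : ℕ → ℕ) (f : V m) : parity (Eop a m f) = -Eop a m (parity f) := by
  induction m with
  | zero => funext δ; simp [parity_apply, Eop_apply]
  | succ m ih =>
    refine ext_lastComp ?_ ?_
    · rw [map_neg, lastComp_zero_parity, lastComp_zero_Eop, lastComp_zero_Eop, map_add, map_smul,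
        map_smul, parity_parity, ih, lastComp_zero_parity, lastComp_one_parity, map_neg,
        parity_parity]
      module
    · rw [map_neg, lastComp_one_parity, lastComp_one_Eop, lastComp_one_Eop, map_smul, ih,
        lastComp_one_parity, map_neg]

theorem Eop_Eop (a : ℕ → ℕ) (f : V m) : Eop a m (Eop a m f) = 0 := by
  induction m with
  | zero => funext δ; simp [Eop_apply]
  | succ m ih =>
    refine ext_lastComp ?_ ?_
    · rw [lastComp_zero_Eop, lastComp_zero_Eop, lastComp_one_Eop, map_add, map_smul, map_smul, ih,
        map_smul, parity_Eop, map_zero]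
      module
    · rw [lastComp_one_Eop, lastComp_one_Eop, map_smul, ih, smul_zero, smul_zero, map_zero]

variable {σ : K →+* K} {a : ℕ → ℕ}

theorem lastComp_zero_barSemi (f : V (m + 1)) :
    lastComp 0 (barSemi σ a (m + 1) f) = barSemi σ a m (lastComp 0 f) := by
  funext δ
  simp only [lastComp_apply, barSemi, barV, Fin.snoc_last, Fin.snoc_castSucc, if_true]

theorem lastComp_one_barSemi (f : V (m + 1)) :
    lastComp 1 (barSemi σ a (m + 1) f) = barSemi σ a m (lastComp 1 f) +
      (q⁻¹ - q) • Eop a m (parity (barSemi σ a m (lastComp 0 f))) := by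
  funext δ
  simp only [lastComp_apply, barSemi, barV, Fin.snoc_last, Fin.snoc_castSucc, one_ne_zero, if_false]
  rfl

variable (σ a) in
/-- The bar involution as a semilinear map. -/
def barMap (m : ℕ) : V m →ₛₗ[σ] V m where
  toFun := barSemi σ a m
  map_add' f g := by
    induction m with
    | zero => exact funext fun δ => map_add σ _ _
    | succ m ih =>
      refine ext_lastComp ?_ ?_
      · simp only [map_add, lastComp_zero_barSemi, ih]
      · simp only [map_add, lastComp_one_barSemi, ih, smul_add]
        abel
  map_smul' c f := by
    induction m with
    | zero => exact funext fun δ => map_mul σ _ _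
    | succ m ih =>
      refine ext_lastComp ?_ ?_
      · simp only [map_smul, lastComp_zero_barSemi, ih]
      · simp only [map_smul, lastComp_one_barSemi, ih, smul_add, smul_comm (σ c)]

theorem lastComp_zero_barMap (f : V (m + 1)) :
    lastComp 0 (barMap σ a (m + 1) f) = barMap σ a m (lastComp 0 f) := lastComp_zero_barSemi f

theorem lastComp_one_barMap (f : V (m + 1)) :
    lastComp 1 (barMap σ a (m + 1) f) = barMap σ a m (lastComp 1 f) +
      (q⁻¹ - q) • Eop a m (parity (barMap σ a m (lastComp 0 f))) := lastComp_one_barSemi f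

theorem barMap_zero_apply (f : V 0) (δ : Fin 0 → Fin 2) : barMap σ a 0 f δ = σ (f δ) := rfl

theorem barMap_parity (f : V m) : barMap σ a m (parity f) = parity (barMap σ a m f) := by
  induction m with
  | zero =>
    funext δ
    rw [barMap_zero_apply, parity_apply, parity_apply, barMap_zero_apply, map_mul, map_pow, map_neg,
      map_one]
  | succ m ih =>
    refine ext_lastComp ?_ ?_
    · rw [lastComp_zero_parity, lastComp_zero_barMap, lastComp_zero_barMap, lastComp_zero_parity,
        ih]
    · rw [lastComp_one_parity, lastComp_one_barMap, lastComp_one_barMap, lastComp_one_parity,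
        lastComp_zero_parity, map_neg, ih, ih, map_add, map_smul, parity_Eop]
      module

theorem barMap_Eop (hσ : σ q = q⁻¹) (f : V m) :
    barMap σ a m (Eop a m f) = Eop a m (barMap σ a m f) := by
  induction m with
  | zero => funext δ; simp [barMap_zero_apply, Eop_apply]
  | succ m ih =>
    have hq : σ (q⁻¹ ^ a m) = q⁻¹ ^ a m - (q⁻¹ - q) * qnum (a m) := by
      rw [map_pow, map_inv₀, hσ, inv_inv, inv_sub_mul_qnum, sub_sub_cancel]
    refine ext_lastComp ?_ ?_
    · simp only [lastComp_zero_barMap, lastComp_zero_Eop, lastComp_one_barMap, map_add, map_smul,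
        map_smulₛₗ, ih, hq, map_qnum hσ, barMap_parity, parity_Eop, parity_parity]
      module
    · simp only [lastComp_one_barMap, lastComp_one_Eop, lastComp_zero_Eop, map_add, map_smul,
        map_smulₛₗ, ih, hq, map_qnum hσ, barMap_parity, parity_Eop, parity_parity, map_neg,
        Eop_Eop]
      module

theorem barMap_barMap (hσ : σ q = q⁻¹) (hσσ : ∀ c, σ (σ c) = c) (f : V m) :
    barMap σ a m (barMap σ a m f) = f := by
  induction m with
  | zero => exact funext fun δ => hσσ _
  | succ m ih =>
    refine ext_lastComp ?_ ?_
    · rw [lastComp_zero_barMap, lastComp_zero_barMap, ih]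
    · rw [lastComp_one_barMap, lastComp_one_barMap, lastComp_zero_barMap, ih, map_add, map_smulₛₗ,
        barMap_Eop hσ, barMap_parity, ih, ih, map_sub, map_inv₀, hσ, inv_inv]
      module

end BarInvolution

section Dominance

variable {n : ℕ}

/-- The sum `η_1 + ⋯ + η_k` of the first `k` entries of a `{0,1}`-sequence. -/
def prefixSum (η : Fin n → Fin 2) (k : ℕ) : ℕ := ∑ i : Fin n, if (i : ℕ) < k then (η i : ℕ) else 0

theorem prefixSum_of_le (η : Fin n → Fin 2) {k : ℕ} (hk : n ≤ k) :
    prefixSum η k = ∑ i, (η i : ℕ) :=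
  Finset.sum_congr rfl fun i _ => if_pos (i.isLt.trans_le hk)

theorem prefixSum_succ (η : Fin n → Fin 2) (i : Fin n) :
    prefixSum η (i + 1) = prefixSum η i + η i := by
  rw [prefixSum, prefixSum, ← Fintype.sum_ite_eq' i fun j => (η j : ℕ), ← Finset.sum_add_distrib]
  refine Finset.sum_congr rfl fun j _ => ?_
  rcases lt_trichotomy j i with h | rfl | h
  · rw [if_pos (by lia), if_pos (by lia), if_neg h.ne, add_zero]
  · rw [if_pos (by lia), if_neg (by lia), if_pos rfl, zero_add]
  · rw [if_neg (by lia), if_neg (by lia), if_neg h.ne', add_zero]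

theorem prefixSum_injective : Function.Injective (prefixSum (n := n)) := by
  intro γ η h
  funext i
  have hi := prefixSum_succ γ i
  rw [h, prefixSum_succ, add_right_inj] at hi
  exact Fin.ext hi.symm

theorem prefixSum_snoc (δ : Fin n → Fin 2) (x : Fin 2) (k : ℕ) :
    prefixSum (Fin.snoc δ x : Fin (n + 1) → Fin 2) k =
      prefixSum δ k + if n < k then (x : ℕ) else 0 := by
  simp only [prefixSum, Fin.sum_univ_castSucc, Fin.snoc_castSucc, Fin.snoc_last,
    Fin.val_castSucc, Fin.val_last]

theorem prefixSum_update_one {δ : Fin n → Fin 2} {i : Fin n} (hi : δ i = 0) (k : ℕ) :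
    prefixSum (Function.update δ i 1) k = prefixSum δ k + if (i : ℕ) < k then 1 else 0 := by
  rw [prefixSum, prefixSum, ← Fintype.sum_ite_eq' i fun j => if (j : ℕ) < k then 1 else 0,
    ← Finset.sum_add_distrib]
  refine Finset.sum_congr rfl fun j _ => ?_
  rcases eq_or_ne j i with rfl | hji
  · rw [Function.update_self, hi, if_pos rfl, Fin.val_zero, ite_self, zero_add, Fin.val_one]
  · rw [Function.update_of_ne hji, if_neg hji, add_zero]

/-- The dominance order on `{0,1}`-sequences: `γ` lies below `η` if both have the same number of
ones and every prefix of `γ` contains at most as many ones as the same prefix of `η`. -/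
structure DomLE (γ η : Fin n → Fin 2) : Prop where
  sum_eq : ∑ i, (γ i : ℕ) = ∑ i, (η i : ℕ)
  prefixSum_le (k : ℕ) : prefixSum γ k ≤ prefixSum η k

/-- The strict dominance order. -/
def DomLT (γ η : Fin n → Fin 2) : Prop := DomLE γ η ∧ γ ≠ η

theorem DomLE.refl (η : Fin n → Fin 2) : DomLE η η := ⟨rfl, fun _ => le_rfl⟩

theorem DomLE.trans {α β γ : Fin n → Fin 2} (h : DomLE α β) (h' : DomLE β γ) : DomLE α γ :=
  ⟨h.sum_eq.trans h'.sum_eq, fun k => (h.prefixSum_le k).trans (h'.prefixSum_le k)⟩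

theorem DomLE.antisymm {γ η : Fin n → Fin 2} (h : DomLE γ η) (h' : DomLE η γ) : γ = η :=
  prefixSum_injective <| funext fun k => (h.prefixSum_le k).antisymm (h'.prefixSum_le k)

instance : IsTrans (Fin n → Fin 2) DomLT where
  trans _ _ _ h h' := ⟨h.1.trans h'.1, fun e => h.2 (h.1.antisymm (e ▸ h'.1))⟩

instance : Std.Irrefl (DomLT (n := n)) where
  irrefl _ h := h.2 rfl

theorem DomLE.snoc {γ δ : Fin n → Fin 2} (h : DomLE γ δ) (x : Fin 2) :
    DomLE (Fin.snoc γ x : Fin (n + 1) → Fin 2) (Fin.snoc δ x) where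
  sum_eq := by simp only [Fin.sum_univ_castSucc, Fin.snoc_castSucc, Fin.snoc_last, h.sum_eq]
  prefixSum_le k := by
    rw [prefixSum_snoc, prefixSum_snoc]
    exact Nat.add_le_add_right (h.prefixSum_le k) _

theorem DomLE.snoc_of_update {γ δ : Fin n → Fin 2} {i : Fin n} (hi : γ i = 0)
    (h : DomLE (Function.update γ i 1) δ) :
    DomLE (Fin.snoc γ 1 : Fin (n + 1) → Fin 2) (Fin.snoc δ 0) where
  sum_eq := by
    have hsum := h.sum_eq
    rw [← prefixSum_of_le _ le_rfl, prefixSum_update_one hi, if_pos i.isLt,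
      prefixSum_of_le _ le_rfl] at hsum
    simpa only [Fin.sum_univ_castSucc, Fin.snoc_castSucc, Fin.snoc_last]
  prefixSum_le k := by
    have hk := h.prefixSum_le k
    rw [prefixSum_update_one hi] at hk
    rw [prefixSum_snoc, prefixSum_snoc]
    refine le_trans ?_ (hk.trans (Nat.le_add_right _ _))
    have := i.isLt
    grind

end Dominance

section Unitriangularity

variable {m : ℕ} {σ : K →+* K} {a : ℕ → ℕ}

theorem eb_eq_single (η : Fin m → Fin 2) : eb η = Pi.single η 1 :=
  funext fun γ => (Pi.single_apply η 1 γ).symm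

theorem lastComp_single_snoc (δ : Fin m → Fin 2) (x : Fin 2) :
    lastComp x (Pi.single (Fin.snoc δ x) 1) = Pi.single δ 1 := by
  funext γ
  simp only [lastComp_apply, Pi.single_apply, Fin.snoc_injective2.eq_iff, and_true]

theorem lastComp_single_snoc_of_ne (δ : Fin m → Fin 2) {x y : Fin 2} (h : x ≠ y) :
    lastComp x (Pi.single (Fin.snoc δ y) 1) = 0 := by
  funext γ
  simp only [lastComp_apply, Pi.single_apply, Fin.snoc_injective2.eq_iff, h, and_false, if_false,
    Pi.zero_apply]

theorem exists_of_Eop_apply_ne_zero {f : V m} {γ : Fin m → Fin 2} (h : Eop a m f γ ≠ 0) :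
    ∃ i, γ i = 0 ∧ f (Function.update γ i 1) ≠ 0 := by
  rw [Eop_apply] at h
  obtain ⟨i, -, hi⟩ := Finset.exists_ne_zero_of_sum_ne_zero h
  obtain ⟨hγi, hi⟩ := ite_ne_right_iff.1 hi
  exact ⟨i, hγi, right_ne_zero_of_mul hi⟩

theorem domLE_of_barMap_single_apply_ne_zero {γ δ : Fin m → Fin 2}
    (h : barMap σ a m (Pi.single δ 1) γ ≠ 0) : DomLE γ δ := by
  induction m with
  | zero => rw [Subsingleton.elim γ δ]; exact DomLE.refl δ
  | succ m ih =>
    induction γ using Fin.snocCases with | snoc γ x =>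
    induction δ using Fin.snocCases with | snoc δ y =>
    rw [← lastComp_apply x (barMap σ a (m + 1) _)] at h
    obtain rfl | rfl : x = 0 ∨ x = 1 := by lia
    · rw [lastComp_zero_barMap] at h
      obtain rfl | rfl : y = 0 ∨ y = 1 := by lia
      · rw [lastComp_single_snoc] at h
        exact (ih h).snoc 0
      · rw [lastComp_single_snoc_of_ne δ zero_ne_one, map_zero] at h
        exact absurd rfl h
    · rw [lastComp_one_barMap] at h
      obtain rfl | rfl : y = 0 ∨ y = 1 := by lia
      · rw [lastComp_single_snoc_of_ne δ one_ne_zero, lastComp_single_snoc, map_zero,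
          zero_add] at h
        obtain ⟨i, hi, h⟩ := exists_of_Eop_apply_ne_zero (right_ne_zero_of_mul h)
        exact DomLE.snoc_of_update hi (ih (right_ne_zero_of_mul h))
      · rw [lastComp_single_snoc, lastComp_single_snoc_of_ne δ zero_ne_one, map_zero, map_zero,
          map_zero, smul_zero, add_zero] at h
        exact (ih h).snoc 1

theorem barMap_single_apply_self (δ : Fin m → Fin 2) : barMap σ a m (Pi.single δ 1) δ = 1 := by
  induction m with
  | zero => rw [barMap_zero_apply, Pi.single_eq_same, map_one]
  | succ m ih =>
    induction δ using Fin.snocCases with | snoc δ x =>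
    rw [← lastComp_apply x (barMap σ a (m + 1) _)]
    obtain rfl | rfl : x = 0 ∨ x = 1 := by lia
    · rw [lastComp_zero_barMap, lastComp_single_snoc, ih]
    · rw [lastComp_one_barMap, lastComp_single_snoc, lastComp_single_snoc_of_ne δ zero_ne_one,
        map_zero, map_zero, map_zero, smul_zero, add_zero, ih]

theorem isUnitriangular_barMap : IsUnitriangular DomLT (barMap σ a m) where
  apply_single_self := barMap_single_apply_self
  rel_of_ne hne h := ⟨domLE_of_barMap_single_apply_ne_zero h, hne⟩

theorem Eop_apply_mem_laurentSubring {f : V m} (hf : ∀ γ, f γ ∈ laurentSubring qUnit)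
    (γ : Fin m → Fin 2) : Eop a m f γ ∈ laurentSubring qUnit := by
  rw [Eop_apply]
  refine sum_mem fun i _ => ?_
  split_ifs
  · refine mul_mem (mul_mem (mul_mem (pow_mem (neg_mem (one_mem _)) _) ?_) ?_) (hf _)
    · exact qnum_mem_laurentSubring _
    · exact Units.val_zpow_eq_zpow_val qUnit _ ▸ zpow_mem_laurentSubring qUnit _
  · exact zero_mem _

theorem barMap_apply_mem_laurentSubring {f : V m} (hf : ∀ γ, σ (f γ) ∈ laurentSubring qUnit)
    (γ : Fin m → Fin 2) : barMap σ a m f γ ∈ laurentSubring qUnit := by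
  induction m with
  | zero => exact hf γ
  | succ m ih =>
    induction γ using Fin.snocCases with | snoc γ x =>
    have hcomp (x : Fin 2) (γ) : barMap σ a m (lastComp x f) γ ∈ laurentSubring qUnit :=
      ih (fun γ => hf _) γ
    rw [← lastComp_apply x (barMap σ a (m + 1) _)]
    obtain rfl | rfl : x = 0 ∨ x = 1 := by lia
    · rw [lastComp_zero_barMap]
      exact hcomp 0 γ
    · rw [lastComp_one_barMap]
      refine add_mem (hcomp 1 γ) (mul_mem (sub_mem inv_q_mem_laurentSubring q_mem_laurentSubring)
        (Eop_apply_mem_laurentSubring (fun γ => ?_) γ))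
      exact mul_mem (pow_mem (neg_mem (one_mem _)) _) (hcomp 0 γ)

end Unitriangularity

section Words

variable {n : ℕ}

theorem wordProd_append_singleton (t : List (Fin (n - 1))) (i : Fin (n - 1)) :
    wordProd n (t ++ [i]) = wordProd n t * s n i := by
  rw [wordProd, wordProd, List.map_append, List.prod_append, List.map_singleton,
    List.prod_singleton]

theorem wordProd_surjective : Function.Surjective (wordProd n) := by
  intro w
  obtain - | n := n
  · exact ⟨[], Subsingleton.elim _ _⟩
  have hw : w ∈ Submonoid.closure (Set.range fun i : Fin n => Equiv.swap i.castSucc i.succ) := by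
    rw [Equiv.Perm.mclosure_swap_castSucc_succ]
    exact Submonoid.mem_top w
  induction hw using Submonoid.closure_induction_right with
  | one => exact ⟨[], rfl⟩
  | mul_right x _ y hy hx =>
    obtain ⟨i, rfl⟩ := hy
    obtain ⟨t, rfl⟩ := hx
    exact ⟨t.append [i], wordProd_append_singleton (n := n + 1) t i⟩

theorem len_wordProd_le (t : List (Fin (n - 1))) : len n (wordProd n t) ≤ t.length :=
  Nat.sInf_le ⟨t, rfl, rfl⟩

theorem exists_length_eq_len (w : Equiv.Perm (Fin n)) :
    ∃ t : List (Fin (n - 1)), t.length = len n w ∧ wordProd n t = w :=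
  have ⟨t, ht⟩ := wordProd_surjective w
  Nat.sInf_mem (s := {m | ∃ t : List (Fin (n - 1)), t.length = m ∧ wordProd n t = w})
    ⟨t.length, t, rfl, ht⟩

theorem exists_s_eq_swap {x y : Fin n} (hxy : (x : ℕ) + 1 = y) : ∃ i, s n i = Equiv.swap x y := by
  obtain ⟨y, hy⟩ := y
  obtain rfl : (x : ℕ) + 1 = y := hxy
  exact ⟨⟨x, by lia⟩, rfl⟩

theorem etaMin_comp_of_mem_parab {k : ℕ} {w : Equiv.Perm (Fin n)}
    (hw : w ∈ parab n (Finset.univ.filter fun i : Fin (n - 1) => (i : ℕ) + 1 ≠ k)) :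
    etaMin n k ∘ w = etaMin n k := by
  induction hw using Subgroup.closure_induction with
  | mem w hw =>
    obtain ⟨i, hi, rfl⟩ := hw
    have hik : (i : ℕ) + 1 ≠ k := (Finset.mem_filter.1 hi).2
    have hi : etaMin n k ⟨i, by lia⟩ = etaMin n k ⟨i + 1, by lia⟩ := by
      simp only [etaMin, show (i : ℕ) + 1 < k ↔ (i : ℕ) < k by lia]
    rw [s, Equiv.comp_swap_eq_update, hi, Function.update_eq_self, ← hi, Function.update_eq_self]
  | one => rfl
  | mul u v _ _ hu hv => rw [Equiv.Perm.coe_mul, ← Function.comp_assoc, hu, hv]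
  | inv u _ hu => rw [Equiv.Perm.coe_inv, Equiv.comp_symm_eq, hu]

end Words

section AdjacentSwaps

variable {n k : ℕ} {γ η : Fin n → Fin 2} {x y : Fin n}

theorem prefixSum_comp_swap (η : Fin n → Fin 2) (hxy : (x : ℕ) + 1 = y) (m : ℕ) :
    prefixSum (η ∘ Equiv.swap x y) m + (if m = y then (η x : ℕ) else 0) =
      prefixSum η m + if m = y then (η y : ℕ) else 0 := by
  have hsum : prefixSum (η ∘ Equiv.swap x y) m =
      ∑ i, if (Equiv.swap x y i : ℕ) < m then (η i : ℕ) else 0 := by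
    rw [← Equiv.sum_comp (Equiv.swap x y)]
    simp only [Equiv.swap_apply_self]
    rfl
  rw [hsum, prefixSum, ← Fintype.sum_ite_eq' x fun i => if m = y then (η i : ℕ) else 0,
    ← Fintype.sum_ite_eq' y fun i => if m = y then (η i : ℕ) else 0, ← Finset.sum_add_distrib,
    ← Finset.sum_add_distrib]
  refine Finset.sum_congr rfl fun i _ => ?_
  rcases eq_or_ne i x with rfl | hix
  · rw [Equiv.swap_apply_left]
    grind
  rcases eq_or_ne i y with rfl | hiy
  · rw [Equiv.swap_apply_right]
    grind
  · rw [Equiv.swap_apply_of_ne_of_ne hix hiy, if_neg hix, if_neg hiy]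

/-- The number of inversions of a `{0,1}`-sequence, up to a constant depending only on its length
and its number of ones. -/
def rank (η : Fin n → Fin 2) : ℕ := ∑ m ∈ Finset.range n, prefixSum η m

theorem rank_comp_swap (η : Fin n → Fin 2) (hxy : (x : ℕ) + 1 = y) :
    rank (η ∘ Equiv.swap x y) + η x = rank η + η y := by
  have h (c : ℕ) : ∑ m ∈ Finset.range n, (if m = y then c else 0) = c := by
    rw [Finset.sum_ite_eq', if_pos (Finset.mem_range.2 y.isLt)]
  rw [rank, rank, ← h (η x), ← h (η y), ← Finset.sum_add_distrib, ← Finset.sum_add_distrib]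
  exact Finset.sum_congr rfl fun m _ => prefixSum_comp_swap η hxy m

theorem rank_comp_wordProd_le (η : Fin n → Fin 2) (t : List (Fin (n - 1))) :
    rank (η ∘ wordProd n t) ≤ rank η + t.length := by
  induction t using List.reverseRecOn with
  | nil => exact le_rfl
  | append_singleton t i ih =>
    have h := rank_comp_swap (η ∘ wordProd n t) (x := ⟨i, by lia⟩) (y := ⟨i + 1, by lia⟩) rfl
    rw [wordProd_append_singleton, List.length_append, List.length_singleton, Equiv.Perm.coe_mul,
      ← Function.comp_assoc]
    change rank ((η ∘ wordProd n t) ∘ s n i) + _ = _ at h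
    lia

theorem rank_comp_le (η : Fin n → Fin 2) (w : Equiv.Perm (Fin n)) :
    rank (η ∘ w) ≤ rank η + len n w := by
  obtain ⟨t, ht, rfl⟩ := exists_length_eq_len w
  exact ht ▸ rank_comp_wordProd_le η t

theorem zeros_comp (η : Fin n → Fin 2) (e : Equiv.Perm (Fin n)) : zeros (η ∘ e) = zeros η := by
  rw [zeros, zeros, Finset.card_filter, Finset.card_filter]
  exact Equiv.sum_comp e fun i => if η i = 0 then 1 else 0

theorem eq_etaMin_of_monotone (h : Monotone η) : η = etaMin n (zeros η) := by
  funext i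
  rw [etaMin, zeros]
  split_ifs with hi
  · by_contra hne
    have hsub : Finset.univ.filter (fun j => η j = 0) ⊆ Finset.Iio i := fun j hj =>
      Finset.mem_Iio.2 <| not_le.1 fun hij =>
        hne (Fin.le_zero_iff.1 ((h hij).trans_eq (Finset.mem_filter.1 hj).2))
    exact (Finset.card_le_card hsub).not_gt ((Fin.card_Iio i).symm ▸ hi)
  · by_contra hne
    have hη : η i = 0 := by lia
    have hsub : Finset.Iic i ⊆ Finset.univ.filter fun j => η j = 0 := fun j hj =>
      Finset.mem_filter.2
        ⟨Finset.mem_univ j, Fin.le_zero_iff.1 ((h (Finset.mem_Iic.1 hj)).trans_eq hη)⟩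
    have hcard := (Fin.card_Iic i).ge.trans (Finset.card_le_card hsub)
    exact hi (Nat.lt_of_succ_le hcard)

theorem exists_descent_of_not_monotone (h : ¬ Monotone η) :
    ∃ x y : Fin n, (x : ℕ) + 1 = y ∧ η x = 1 ∧ η y = 0 := by
  rw [monotone_iff_forall_covBy] at h
  push Not at h
  obtain ⟨x, y, hxy, h⟩ := h
  exact ⟨x, y, Nat.covBy_iff_add_one_eq.1 (Fin.covBy_iff.1 hxy), by lia, by lia⟩

theorem DomLE.eq_etaMin (h : DomLE γ (etaMin n k)) : γ = etaMin n k := by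
  have hle : ∀ i ∈ Finset.univ, (γ i : ℕ) ≤ etaMin n k i := by
    intro i _
    by_cases hi : (i : ℕ) < k
    · have hk : prefixSum (etaMin n k) k = 0 := Finset.sum_eq_zero fun j _ => by
        rw [etaMin]; split_ifs <;> rfl
      have hγ := Finset.sum_eq_zero_iff.1 (Nat.le_zero.1 (hk ▸ h.prefixSum_le k)) i
        (Finset.mem_univ i)
      rw [if_pos hi] at hγ
      exact hγ ▸ Nat.zero_le _
    · rw [etaMin, if_neg hi]
      exact Fin.le_last (γ i)
  exact funext fun i => Fin.ext ((Finset.sum_eq_sum_iff_of_le hle).1 h.sum_eq i (Finset.mem_univ i))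

theorem DomLE.comp_swap (h : DomLE γ η) (hxy : (x : ℕ) + 1 = y) (hx : γ x = η x) (hy : γ y = η y) :
    DomLE (γ ∘ Equiv.swap x y) (η ∘ Equiv.swap x y) where
  sum_eq := (Equiv.sum_comp _ fun i => (γ i : ℕ)).trans
    (h.sum_eq.trans (Equiv.sum_comp _ fun i => (η i : ℕ)).symm)
  prefixSum_le m := by
    have hγm := prefixSum_comp_swap γ hxy m
    have hηm := prefixSum_comp_swap η hxy m
    have hm := h.prefixSum_le m
    rw [hx, hy] at hγm
    lia

theorem DomLE.comp_swap_right (h : DomLE γ η) (hxy : (x : ℕ) + 1 = y) (hx : η x = 1) (hy : η y = 0)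
    (hγ : γ x ≤ γ y) : DomLE γ (η ∘ Equiv.swap x y) where
  sum_eq := h.sum_eq.trans (Equiv.sum_comp _ fun i => (η i : ℕ)).symm
  prefixSum_le m := by
    have hηm := prefixSum_comp_swap η hxy m
    have hm := h.prefixSum_le m
    rw [hx, hy] at hηm
    split_ifs at hηm with hmy
    · have hηx := prefixSum_succ η x
      have hγx := prefixSum_succ γ x
      have hηy := prefixSum_succ η y
      have hγy := prefixSum_succ γ y
      have hxm := h.prefixSum_le x
      have hym := h.prefixSum_le (y + 1)
      grind
    · lia

end AdjacentSwaps

section ReducedWords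

variable {n k : ℕ} {γ η : Fin n → Fin 2} {t : List (Fin (n - 1))}

/-- The word `t` represents `η`, i.e. `η = η_min · t`, and it is as short as the rank allows: each
of its letters increases the rank by one. -/
structure IsMinimalWord (k : ℕ) (t : List (Fin (n - 1))) (η : Fin n → Fin 2) : Prop where
  etaMin_comp : etaMin n k ∘ wordProd n t = η
  rank_eq : rank η = rank (etaMin n k) + t.length

namespace IsMinimalWord

theorem nil : IsMinimalWord k [] (etaMin n k) := ⟨rfl, rfl⟩

theorem concat {i : Fin (n - 1)} {x y : Fin n} (hi : s n i = Equiv.swap x y)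
    (hxy : (x : ℕ) + 1 = y) (hx : η x = 1) (hy : η y = 0)
    (h : IsMinimalWord k t (η ∘ Equiv.swap x y)) : IsMinimalWord k (t ++ [i]) η where
  etaMin_comp := by
    rw [wordProd_append_singleton, Equiv.Perm.coe_mul, ← Function.comp_assoc, h.etaMin_comp, hi,
      Function.comp_assoc, ← Equiv.Perm.coe_mul, Equiv.swap_mul_self, Equiv.Perm.coe_one,
      Function.comp_id]
  rank_eq := by
    have hr := rank_comp_swap η hxy
    rw [hx, hy, h.rank_eq] at hr
    rw [List.length_append, List.length_singleton]
    exact hr.symm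

theorem len_eq (h : IsMinimalWord k t η) : len n (wordProd n t) = t.length := by
  refine (len_wordProd_le t).antisymm ?_
  have hr := rank_comp_le (etaMin n k) (wordProd n t)
  rw [h.etaMin_comp, h.rank_eq] at hr
  exact Nat.le_of_add_le_add_left hr

theorem shortRep (h : IsMinimalWord k t η) : shortRep n k (wordProd n t) := by
  intro w hw
  have hr := rank_comp_le (etaMin n k) (w * wordProd n t)
  rw [Equiv.Perm.coe_mul, ← Function.comp_assoc, etaMin_comp_of_mem_parab hw, h.etaMin_comp,
    h.rank_eq] at hr
  exact h.len_eq.trans_le (Nat.le_of_add_le_add_left hr)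

theorem exists_sublist (h : DomLE γ η) (hk : zeros η = k) : ∃ t u : List (Fin (n - 1)),
    t.Sublist u ∧ IsMinimalWord k t γ ∧ IsMinimalWord k u η := by
  induction hr : rank η using Nat.strong_induction_on generalizing γ η with | _ r ih =>
  by_cases hη : Monotone η
  · obtain rfl := hk ▸ eq_etaMin_of_monotone hη
    exact ⟨[], [], .refl _, h.eq_etaMin ▸ nil, nil⟩
  obtain ⟨x, y, hxy, hx, hy⟩ := exists_descent_of_not_monotone hη
  obtain ⟨i, hi⟩ := exists_s_eq_swap hxy
  have hlt : rank (η ∘ Equiv.swap x y) < r := by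
    have := rank_comp_swap η hxy
    rw [hx, hy] at this
    exact hr ▸ Nat.lt_of_succ_le this.le
  by_cases hγ : γ x ≤ γ y
  · obtain ⟨t, u, htu, ht, hu⟩ :=
      ih _ hlt (h.comp_swap_right hxy hx hy hγ) ((zeros_comp η _).trans hk) rfl
    exact ⟨t, u ++ [i], htu.trans (List.sublist_append_left _ _), ht, hu.concat hi hxy hx hy⟩
  · have hγx : γ x = 1 := by lia
    have hγy : γ y = 0 := by lia
    obtain ⟨t, u, htu, ht, hu⟩ :=
      ih _ hlt (h.comp_swap hxy (hγx.trans hx.symm) (hγy.trans hy.symm))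
        ((zeros_comp η _).trans hk) rfl
    exact ⟨t ++ [i], u ++ [i], htu.append (.refl _), ht.concat hi hxy hγx hγy,
      hu.concat hi hxy hx hy⟩

end IsMinimalWord

theorem seqLT_of_domLT (h : DomLT γ η) : seqLT n (zeros η) γ η := by
  obtain ⟨t, u, htu, ht, hu⟩ := IsMinimalWord.exists_sublist h.1 rfl
  refine ⟨wordProd n t, wordProd n u, ht.shortRep, hu.shortRep,
    ⟨⟨u, hu.len_eq.symm, rfl, t, htu, rfl⟩, fun e => h.2 ?_⟩, ht.etaMin_comp.symm,
    hu.etaMin_comp.symm⟩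
  rw [← ht.etaMin_comp, e, hu.etaMin_comp]

end ReducedWords

section CanonicalBasis

variable {σ : K →+* K} {a : ℕ → ℕ} {l : ℕ} {η : Fin l → Fin 2} {v : V l}

theorem sum_smul_eb (c : V l) : ∑ γ, c γ • eb γ = c := by
  simp only [eb_eq_single]
  exact (pi_eq_sum_univ' c).symm

theorem isCanon_iff : IsCanon σ a l η v ↔ barMap σ a l v = v ∧ ∀ γ : Fin l → Fin 2,
    (v - Pi.single η 1 : V l) γ ∈ positiveLattice q ∧
      (¬ seqLT l (zeros η) γ η → (v - Pi.single η 1 : V l) γ = 0) := by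
  have hsum (R : (Fin l → Fin 2) → Polynomial ℤ) :
      v = eb η + ∑ γ, (q * Polynomial.aeval q (R γ)) • eb γ ↔
        ∀ γ, q * Polynomial.aeval q (R γ) = (v - Pi.single η 1 : V l) γ := by
    rw [sum_smul_eb fun γ => q * Polynomial.aeval q (R γ), eb_eq_single, ← sub_eq_iff_eq_add',
      eq_comm, funext_iff]
  refine and_congr Iff.rfl ⟨?_, fun h => ?_⟩
  · rintro ⟨R, hR, hv⟩ γ
    rw [hsum] at hv
    refine ⟨mem_positiveLattice.2 ⟨R γ, hv γ⟩, fun hγ => ?_⟩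
    rw [← hv, hR γ hγ, map_zero, mul_zero]
  · choose R hR using fun γ => mem_positiveLattice.1 (h γ).1
    refine ⟨fun γ => if seqLT l (zeros η) γ η then R γ else 0, fun γ hγ => if_neg hγ,
      (hsum _).2 fun γ => ?_⟩
    split_ifs with hγ
    · exact hR γ
    · rw [map_zero, mul_zero, (h γ).2 hγ]

theorem barMap_single_apply_mem_laurentSubring (γ δ : Fin l → Fin 2) :
    barMap σ a l (Pi.single δ 1) γ ∈ laurentSubring qUnit := by
  refine barMap_apply_mem_laurentSubring (fun ε => ?_) γ
  rw [Pi.single_apply, apply_ite σ, map_one, map_zero]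
  split_ifs
  exacts [one_mem _, zero_mem _]

theorem exists_isCanon (hσ : σ q = q⁻¹) (hσc : ∀ z : ℂ, σ (algebraMap ℂ K z) = algebraMap ℂ K z)
    (a : ℕ → ℕ) (η : Fin l → Fin 2) : ∃ v, IsCanon σ a l η v := by
  have hσu : σ qUnit = ↑qUnit⁻¹ := hσ
  obtain ⟨v, hv, hvη⟩ := isUnitriangular_barMap.exists_apply_eq_self
    (barMap_barMap (a := a) hσ (map_map_eq_self hσ hσc)) (positiveLattice_le_laurentSubring qUnit)
    barMap_single_apply_mem_laurentSubring
    (fun _ => exists_mem_positiveLattice_eq_sub transcendental_q hσu) η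
  exact ⟨v, isCanon_iff.2 ⟨hv, fun γ =>
    ⟨(hvη γ).1, fun hγ => (hvη γ).2 fun hlt => hγ (seqLT_of_domLT hlt)⟩⟩⟩

theorem IsCanon.unique (hσ : σ q = q⁻¹) {v w : V l} (hv : IsCanon σ a l η v)
    (hw : IsCanon σ a l η w) : v = w := by
  have hσu : σ qUnit = ↑qUnit⁻¹ := hσ
  obtain ⟨hv, hvη⟩ := isCanon_iff.1 hv
  obtain ⟨hw, hwη⟩ := isCanon_iff.1 hw
  refine sub_eq_zero.1 <| isUnitriangular_barMap.eq_zero_of_apply_eq_self (ψ := barMap σ a l)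
    (fun _ => eq_zero_of_mem_positiveLattice transcendental_q hσu) (fun γ => ?_)
    (by rw [map_sub, hv, hw])
  rw [← sub_sub_sub_cancel_right v w (Pi.single η 1)]
  exact sub_mem (hvη γ).1 (hwη γ).1

end CanonicalBasis

/-!
STATEMENT 12: For every sequence `a = (a_1,…,a_l)` of strictly positive integers and every
standard basis element `v^a_η` of `V(a)` there is a unique bar-invariant element
`v^{◊a}_η` such that `v^{◊a}_η - v^a_η` is a `q·ℤ[q]`-linear combination of standard basis
elements strictly smaller than `v^a_η` (Lusztig's canonical basis of `V(a)`).

`V(a) = V(a_1) ⊗ ⋯ ⊗ V(a_l)` is modelled concretely as `(Fin l → Fin 2) → ℂ(q)` with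
standard basis `v^a_η = eb η`; the bar involution is defined inductively via
`Θ' = 1 + (q⁻¹-q) E ⊗ F` (`barV` on standard basis vectors, extended semilinearly with
respect to the field homomorphism `barK` implementing `q ↦ q⁻¹`), and the partial order
`seqLT` on standard basis vectors of a given weight is induced from the Bruhat order via
`w ↦ η_min·w`.
-/

theorem statement12 (l : ℕ) (a : ℕ → ℕ) (ha : ∀ i, 0 < a i)
    (barK : K →+* K) (hbarKq : barK q = q⁻¹)
    (hbarKc : ∀ z : ℂ, barK (algebraMap ℂ K z) = algebraMap ℂ K z)
    (η : Fin l → Fin 2) :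
    ∃! v : V l, IsCanon barK a l η v := by
  obtain ⟨v, hv⟩ := exists_isCanon hbarKq hbarKc a η
  exact ⟨v, hv, fun _ hw => hw.unique hbarKq hv⟩
end
end
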